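/- arXiv:2503.21580 — 2 statements merged into one kernel-verified Lean document; each statement's English description precedes it below -/
import Mathlib

section
/- Let φ(x,t) = t^p + a(x) t^q with 1 < p < q < ∞, a a nonnegative function in C^{0,α}(ℝⁿ) for some α ∈ (0,1], and assume q/p ≤ 1 + α/n. Let z ∈ ℝⁿ, r > 0, and let u be Lipschitz on B(z,r). Let 1 ≤ m ≤ p, and if m < n assume additionally that q ≤ nm/(n−m). Set Z = {x ∈ B̄(0,1/2) : u(z + rx) = 0}, and assume cap_m(Z; B(0,1)) > 0. Let y ∈ ℝⁿ, R > 0, and let a*_{y,R} denote either inf_{B(y,R)} a or sup_{B(y,R)} a, with φ*_{y,R}(t) = t^p + a*_{y,R} t^q. Then there is a constant c = c(n,p,q,m) such that ⨍_{B(z,r)} φ*_{y,R}(|u|) dx ≤ c · (1 + a*_{y,R} · cap_m(Z;B(0,1))^{(p−q)/m} · ((⨍_{B(z,r)} |r∇u|^m dx)^{1/m})^{q−p}) / cap_m(Z;B(0,1))^{p/m} · (⨍_{B(z,r)} |r∇u|^m dx)^{p/m}. -/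
open MeasureTheory Metric Set

noncomputable section

/-- Euclidean space `ℝⁿ`. -/
abbrev En (n : ℕ) : Type := EuclideanSpace ℝ (Fin n)

/-- Norm of the (a.e. defined, by Rademacher's theorem) gradient of `u` at `x`. -/
def gnorm {n : ℕ} (u : En n → ℝ) (x : En n) : ℝ := ‖fderiv ℝ u x‖

/-- Admissible test functions for the level-`t` capacity of `E` in `O`:
Lipschitz on the closure of `O`, `u ≥ t` on `E`, `u = 0` on `∂O`. -/
def Adm {n : ℕ} (E O : Set (En n)) (t : ℝ) : Set (En n → ℝ) :=
  {u | (∃ K, LipschitzOnWith K u (closure O)) ∧ (∀ x ∈ E, t ≤ u x) ∧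
    ∀ x ∈ frontier O, u x = 0}

/-- Level-`t` variational capacity with integrand `ψ` and normalization `ψm`. -/
def capLevel {n : ℕ} (ψ : En n → ℝ → ℝ) (ψm : ℝ → ℝ)
    (E O : Set (En n)) (t : ℝ) : ℝ :=
  sInf ((fun u => ∫ x in O, ψ x (gnorm u x) / ψm t) '' Adm E O t)

/-- Infimal capacity with integrand `ψ` and normalization `ψm`. -/
def capInfGen {n : ℕ} (ψ : En n → ℝ → ℝ) (ψm : ℝ → ℝ) (E O : Set (En n)) : ℝ :=
  ⨅ t : Ioi (0 : ℝ), capLevel ψ ψm E O (t : ℝ)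

/-- The double-phase integrand `φ(x,t) = t^p + a(x) t^q`. -/
def phi {n : ℕ} (a : En n → ℝ) (p q : ℝ) (x : En n) (t : ℝ) : ℝ :=
  t ^ p + a x * t ^ q

/-- `a_O^- = inf_{x ∈ O} a(x)`. -/
def aInfOn {n : ℕ} (a : En n → ℝ) (O : Set (En n)) : ℝ := sInf (a '' O)

/-- `a_O^+ = sup_{x ∈ O} a(x)`. -/
def aSupOn {n : ℕ} (a : En n → ℝ) (O : Set (En n)) : ℝ := sSup (a '' O)

/-- `φ_O^-(t) = t^p + a_O^- t^q`. -/
def phiMinus {n : ℕ} (a : En n → ℝ) (p q : ℝ) (O : Set (En n)) (t : ℝ) : ℝ :=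
  t ^ p + aInfOn a O * t ^ q

/-- Level-`t` variational capacity for the double-phase integrand. -/
def capPhiLevel {n : ℕ} (a : En n → ℝ) (p q t : ℝ) (E O : Set (En n)) : ℝ :=
  capLevel (phi a p q) (phiMinus a p q O) E O t

/-- Infimal `φ`-capacity. -/
def capPhiInf {n : ℕ} (a : En n → ℝ) (p q : ℝ) (E O : Set (En n)) : ℝ :=
  ⨅ t : Ioi (0 : ℝ), capPhiLevel a p q (t : ℝ) E O

/-- Variational `p`-capacity. -/
def capP {n : ℕ} (p : ℝ) (E O : Set (En n)) : ℝ :=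
  sInf ((fun u => ∫ x in O, gnorm u x ^ p) '' Adm E O 1)

/-- The rescaled set `{x ∈ B̄(0,1/2) : z + r x ∈ E}`. -/
def shiftedSet {n : ℕ} (E : Set (En n)) (z : En n) (r : ℝ) : Set (En n) :=
  {x ∈ closedBall (0 : En n) (1 / 2) | z + r • x ∈ E}

/-- Local uniform infimal `φ`-fatness with parameters `cfat` and `ro`. -/
def LocUnifPhiFat {n : ℕ} (a : En n → ℝ) (p q : ℝ) (E : Set (En n))
    (cfat ro : ℝ) : Prop :=
  ∀ z ∈ E, ∀ r : ℝ, 0 < r → r < ro →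
    cfat ≤ capPhiInf (fun x => a (z + r • x)) p q (shiftedSet E z r) (ball (0 : En n) 1)

/-- Local uniform `p`-fatness with parameters `cfat` and `ro`. -/
def LocUnifPFat {n : ℕ} (p : ℝ) (E : Set (En n)) (cfat ro : ℝ) : Prop :=
  ∀ z ∈ E, ∀ r : ℝ, 0 < r → r < ro →
    cfat ≤ capP p (shiftedSet E z r) (ball (0 : En n) 1)

/-- `Lip_0(Ω)`: Lipschitz functions with compact support contained in `Ω`,
extended by zero to `ℝⁿ`. -/
def Lip0 {n : ℕ} (Ω : Set (En n)) : Set (En n → ℝ) :=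
  {u | (∃ K, LipschitzWith K u) ∧ HasCompactSupport u ∧ tsupport u ⊆ Ω}

/-- Restricted centered maximal operator `M_R f(x) = sup_{0<r<R} ⨍_{B(x,r)} |f|`. -/
def maxOp {n : ℕ} (R : ℝ) (f : En n → ℝ) (x : En n) : ℝ :=
  ⨆ r : Ioo (0 : ℝ) R, ⨍ y in ball x (r : ℝ), |f y|

open Filter Topology Convolution ContinuousLinearMap
open scoped NNReal ENNReal

/-- Mollification of a Lipschitz function: `C¹` approximations with the same Lipschitz constant,
converging pointwise, with gradients converging almost everywhere. -/
lemma exists_contDiff_approx {n : ℕ} {V : En n → ℝ} {K : ℝ≥0} (hV : LipschitzWith K V) :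
    ∃ W : ℕ → En n → ℝ, (∀ k, ContDiff ℝ 1 (W k)) ∧ (∀ k, LipschitzWith K (W k)) ∧
      (∀ x, Tendsto (fun k => W k x) atTop (𝓝 (V x))) ∧
      (∀ᵐ x, Tendsto (fun k => fderiv ℝ (W k) x) atTop (𝓝 (fderiv ℝ V x))) ∧
      (∀ k x, (∀ y ∈ ball x 1, V y = 0) → W k x = 0) := by
  have hpos : ∀ k : ℕ, (0 : ℝ) < 1 / ((k : ℝ) + 1) := fun k => by positivity
  let φ : ℕ → ContDiffBump (0 : En n) := fun k =>
    ⟨1 / ((k : ℝ) + 1) / 2, 1 / ((k : ℝ) + 1), half_pos (hpos k), half_lt_self (hpos k)⟩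
  have hout : Tendsto (fun k => (φ k).rOut) atTop (𝓝 0) := tendsto_one_div_add_atTop_nhds_zero_nat
  have hratio : ∀ k, (φ k).rOut ≤ 2 * (φ k).rIn := fun k => by
    change 1 / ((k : ℝ) + 1) ≤ 2 * (1 / ((k : ℝ) + 1) / 2)
    linarith
  have hVloc : LocallyIntegrable V volume := hV.continuous.locallyIntegrable
  have hint : ∀ k x, Integrable (fun t => (φ k).normed volume t • V (x - t)) := fun k x => by
    have hc : Continuous fun t => (φ k).normed volume t • V (x - t) :=
      (φ k).continuous_normed.smul (hV.continuous.comp (continuous_const.sub continuous_id))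
    exact hc.integrable_of_hasCompactSupport ((φ k).hasCompactSupport_normed.smul_right)
  have hbound : ∀ x, ‖fderiv ℝ V x‖ ≤ K := fun x => norm_fderiv_le_of_lipschitz ℝ hV
  have hmeas : Measurable (fderiv ℝ V) := measurable_fderiv ℝ V
  have hgloc : LocallyIntegrable (fderiv ℝ V) volume := by
    refine (locallyIntegrable_const (K : ℝ)).mono hmeas.aestronglyMeasurable ?_
    filter_upwards with x
    simpa using hbound x
  have hdiff : ∀ k x, HasFDerivAt ((φ k).normed volume ⋆[lsmul ℝ ℝ, volume] V)
      (((φ k).normed volume ⋆[lsmul ℝ ℝ, volume] fderiv ℝ V) x) x := fun k x => by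
    have hae : ∀ᵐ t : En n, DifferentiableAt ℝ V (x - t) :=
      (Measure.measurePreserving_sub_left volume x).quasiMeasurePreserving.ae hV.ae_differentiableAt
    refine (hasFDerivAt_integral_of_dominated_loc_of_lip (s := univ)
      (bound := fun t => (φ k).normed volume t * K)
      (F := fun y t => (φ k).normed volume t • V (y - t))
      (F' := fun t => (φ k).normed volume t • fderiv ℝ V (x - t)) univ_mem
      (Eventually.of_forall fun y => (hint k y).aestronglyMeasurable) (hint k x) ?_ ?_ ?_ ?_).2
    · exact ((φ k).continuous_normed.measurable.smul
        (hmeas.comp (measurable_const.sub measurable_id))).aestronglyMeasurable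
    · filter_upwards with t
      refine LipschitzOnWith.of_dist_le_mul fun y _ w _ => ?_
      have h0 := (φ k).nonneg_normed (μ := volume) t
      have := hV.dist_le_mul (y - t) (w - t)
      rw [dist_sub_right] at this
      rw [dist_smul₀, Real.coe_nnabs, abs_of_nonneg (by positivity), Real.norm_of_nonneg h0,
        mul_assoc]
      gcongr
    · exact (φ k).integrable_normed.mul_const _
    · filter_upwards [hae] with t ht
      have h1 : HasFDerivAt (fun y => V (y - t)) (fderiv ℝ V (x - t)) x := by
        have := ht.hasFDerivAt.comp x ((hasFDerivAt_id x).sub_const t)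
        rwa [ContinuousLinearMap.comp_id] at this
      exact h1.const_smul ((φ k).normed volume t)
  refine ⟨fun k => (φ k).normed volume ⋆[lsmul ℝ ℝ, volume] V, fun k => ?_, fun k => ?_,
    fun x => ?_, ?_, fun k x hx => ?_⟩
  · exact (φ k).hasCompactSupport_normed.contDiff_convolution_left (n := 1) _
      ((φ k).contDiff_normed (n := 1)) hVloc
  · refine lipschitzWith_of_nnnorm_fderiv_le (𝕜 := ℝ) (fun x => (hdiff k x).differentiableAt)
      fun x => ?_
    rw [(hdiff k x).fderiv, ← NNReal.coe_le_coe, coe_nnnorm]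
    have := norm_integral_le_of_norm_le (μ := volume)
      (f := fun t => (φ k).normed volume t • fderiv ℝ V (x - t))
      (g := fun t => (φ k).normed volume t * K) ((φ k).integrable_normed.mul_const _) (by
        filter_upwards with t
        rw [norm_smul, Real.norm_of_nonneg ((φ k).nonneg_normed t)]
        exact mul_le_mul_of_nonneg_left (hbound _) ((φ k).nonneg_normed t))
    rwa [integral_mul_const, (φ k).integral_normed, one_mul] at this
  · exact ContDiffBump.convolution_tendsto_right_of_continuous hout hV.continuous x
  · filter_upwards [ContDiffBump.ae_convolution_tendsto_right_of_locallyIntegrable (μ := volume)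
      hout (Eventually.of_forall hratio) hgloc] with x hx
    refine hx.congr fun k => ((hdiff k x).fderiv).symm
  · have hle : (φ k).rOut ≤ 1 := by
      change 1 / ((k : ℝ) + 1) ≤ 1
      rw [div_le_one (by positivity)]
      linarith [(Nat.cast_nonneg k : (0 : ℝ) ≤ k)]
    have := (φ k).normed_convolution_eq_right (μ := volume) (g := V) (x₀ := x) fun y hy => by
      rw [hx y (ball_subset_ball hle hy), hx x (mem_ball_self one_pos)]
    exact this.trans (hx x (mem_ball_self one_pos))

lemma support_fderiv_subset_closedBall {n : ℕ} {w : En n → ℝ} {R : ℝ}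
    (hw : ∀ x ∉ ball (0 : En n) R, w x = 0) :
    Function.support (fderiv ℝ w) ⊆ closedBall (0 : En n) R := by
  refine (support_fderiv_subset ℝ).trans (closure_minimal ?_ isClosed_closedBall)
  intro x hx
  by_contra h
  exact hx (hw x fun h' => h (ball_subset_closedBall h'))

lemma eLpNorm_fderiv_le_of_exponent_le {n : ℕ} {m m' : ℝ≥0} (h : m' ≤ m) (hm' : 1 ≤ m') (R : ℝ) :
    ∃ C : ℝ≥0, ∀ w : En n → ℝ, (∀ x ∉ ball (0 : En n) R, w x = 0) →
      eLpNorm (fderiv ℝ w) m' volume ≤ C * eLpNorm (fderiv ℝ w) m volume := by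
  have hfin : (volume (closedBall (0 : En n) R)) ^ (1 / (m' : ℝ) - 1 / (m : ℝ)) ≠ ⊤ := by
    refine ENNReal.rpow_ne_top_of_nonneg ?_ measure_closedBall_lt_top.ne
    rw [sub_nonneg]
    exact one_div_le_one_div_of_le (by positivity) (by exact_mod_cast h)
  refine ⟨((volume (closedBall (0 : En n) R)) ^ (1 / (m' : ℝ) - 1 / (m : ℝ))).toNNReal,
    fun w hw => ?_⟩
  have hsupp := support_fderiv_subset_closedBall hw
  rw [ENNReal.coe_toNNReal hfin,
    ← eLpNorm_restrict_eq_of_support_subset (f := fderiv ℝ w) (p := (m' : ℝ≥0∞)) hsupp,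
    ← eLpNorm_restrict_eq_of_support_subset (f := fderiv ℝ w) (p := (m : ℝ≥0∞)) hsupp, mul_comm]
  have := eLpNorm_le_eLpNorm_mul_rpow_measure_univ (p := (m' : ℝ≥0∞)) (q := m)
    (μ := volume.restrict (closedBall (0 : En n) R)) (f := fderiv ℝ w) (by exact_mod_cast h)
    (measurable_fderiv ℝ w).aestronglyMeasurable
  simpa using this

lemma enorm_le_lintegral_fderiv_dim_one {w : En 1 → ℝ} (hw : ContDiff ℝ 1 w)
    (hc : HasCompactSupport w) (x : En 1) : ‖w x‖ₑ ≤ ∫⁻ y, ‖fderiv ℝ w y‖ₑ := by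
  let e : ℝ ≃ₗᵢ[ℝ] En 1 := (OrthonormalBasis.singleton (Fin 1) ℝ).repr
  have h1 := HasCompactSupport.enorm_le_lintegral_Ici_deriv (f := w ∘ e)
    (hw.comp e.contDiff) (hc.comp_homeomorph e.toHomeomorph) (e.symm x)
  simp only [Function.comp_apply, LinearIsometryEquiv.apply_symm_apply] at h1
  refine h1.trans ((setLIntegral_le_lintegral _ _).trans ?_)
  rw [← e.measurePreserving.lintegral_comp_emb e.toMeasurableEquiv.measurableEmbedding]
  refine lintegral_mono fun y => ?_
  have hd : HasDerivAt (w ∘ e) (fderiv ℝ w (e y) (e 1)) y := by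
    have := ((hw.differentiable one_ne_zero (e y)).hasFDerivAt.comp y
      e.toContinuousLinearEquiv.hasFDerivAt).hasDerivAt
    simpa using this
  rw [hd.deriv]
  refine (ContinuousLinearMap.le_opENorm _ _).trans ?_
  simp

/-- The Sobolev inequality for `C¹` functions supported in a fixed ball. -/
lemma sobolev_of_contDiff {n : ℕ} (hn : 0 < n) {m s : ℝ≥0} (hm : 1 ≤ m) (hs : 0 < s)
    (hms : (m : ℝ) < n → (m : ℝ)⁻¹ - (n : ℝ)⁻¹ ≤ (s : ℝ)⁻¹) (R : ℝ) :
    ∃ C : ℝ≥0, ∀ w : En n → ℝ, ContDiff ℝ 1 w → (∀ x ∉ ball (0 : En n) R, w x = 0) →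
      eLpNorm w s volume ≤ C * eLpNorm (fderiv ℝ w) m volume := by
  have hsub : ∀ w : En n → ℝ, (∀ x ∉ ball (0 : En n) R, w x = 0) →
      Function.support w ⊆ ball (0 : En n) R := fun w hw x hx => by
    by_contra h
    exact hx (hw x h)
  have hGNS : ∀ m' : ℝ≥0, 1 ≤ m' → (m' : ℝ) < n → (m' : ℝ)⁻¹ - (n : ℝ)⁻¹ ≤ (s : ℝ)⁻¹ →
      ∃ C : ℝ≥0, ∀ w : En n → ℝ, ContDiff ℝ 1 w → (∀ x ∉ ball (0 : En n) R, w x = 0) →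
      eLpNorm w s volume ≤ C * eLpNorm (fderiv ℝ w) m' volume := fun m' h1 h2 h3 =>
    ⟨_, fun w hw hw0 => eLpNorm_le_eLpNorm_fderiv_of_le volume hw (hsub w hw0) h1
      (by rw [finrank_euclideanSpace_fin]; exact_mod_cast h2)
      (by rw [finrank_euclideanSpace_fin]; exact_mod_cast h3) isBounded_ball⟩
  have hsR : (0 : ℝ) < s := by exact_mod_cast hs
  have hnR : (0 : ℝ) < n := by exact_mod_cast hn
  by_cases hmn : (m : ℝ) < n
  · exact hGNS m hm hmn (hms hmn)
  push Not at hmn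
  rcases Nat.lt_or_ge 1 n with h2 | h2
  · have h2R : (1 : ℝ) < n := by exact_mod_cast h2
    obtain ⟨m', h1, h3, h4⟩ : ∃ m' : ℝ≥0, 1 ≤ m' ∧ (m' : ℝ) < n ∧
        (m' : ℝ)⁻¹ - (n : ℝ)⁻¹ ≤ (s : ℝ)⁻¹ := by
      have hpos : 0 < ((s : ℝ)⁻¹ + (n : ℝ)⁻¹)⁻¹ := by positivity
      refine ⟨max 1 (((s : ℝ)⁻¹ + (n : ℝ)⁻¹)⁻¹).toNNReal, le_max_left _ _, ?_, ?_⟩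
      · rw [NNReal.coe_max, Real.coe_toNNReal _ hpos.le]
        refine max_lt (by simpa using h2R) ?_
        rw [inv_lt_comm₀ (by positivity) hnR]
        have : (0 : ℝ) < (s : ℝ)⁻¹ := by positivity
        linarith
      · rw [NNReal.coe_max, Real.coe_toNNReal _ hpos.le, sub_le_iff_le_add]
        rw [inv_le_comm₀ (lt_max_of_lt_right hpos) (by positivity)]
        exact le_max_right _ _
    obtain ⟨C, hC⟩ := hGNS m' h1 h3 h4
    obtain ⟨C', hC'⟩ := eLpNorm_fderiv_le_of_exponent_le (n := n)
      (NNReal.coe_le_coe.1 (h3.le.trans hmn)) h1 R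
    refine ⟨C * C', fun w hw hw0 => (hC w hw hw0).trans ?_⟩
    rw [ENNReal.coe_mul, mul_assoc]
    gcongr
    exact hC' w hw0
  · obtain rfl : n = 1 := by omega
    obtain ⟨C', hC'⟩ := eLpNorm_fderiv_le_of_exponent_le (n := 1) hm le_rfl R
    have hfin : (volume (ball (0 : En 1) R)) ^ (s : ℝ)⁻¹ ≠ ⊤ :=
      ENNReal.rpow_ne_top_of_nonneg (by positivity) measure_ball_lt_top.ne
    refine ⟨(volume (ball (0 : En 1) R) ^ (s : ℝ)⁻¹).toNNReal * C', fun w hw hw0 => ?_⟩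
    rw [ENNReal.coe_mul, mul_assoc, ENNReal.coe_toNNReal hfin]
    have hc : HasCompactSupport w := HasCompactSupport.intro (isCompact_closedBall (0 : En 1) R)
      fun x hx => hw0 x fun h' => hx (ball_subset_closedBall h')
    have h1 := hC' w hw0
    rw [ENNReal.coe_one, eLpNorm_one_eq_lintegral_enorm] at h1
    rw [← eLpNorm_restrict_eq_of_support_subset (hsub w hw0)]
    refine (eLpNorm_le_of_ae_enorm_bound (C := ∫⁻ y, ‖fderiv ℝ w y‖ₑ)
      (Eventually.of_forall (enorm_le_lintegral_fderiv_dim_one hw hc))).trans ?_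
    rw [mul_comm]
    simpa [mul_comm] using mul_le_mul_right h1 (volume (ball (0 : En 1) R) ^ (s : ℝ)⁻¹)

lemma tendsto_eLpNorm_of_bounded {α F : Type*} [MeasurableSpace α] {μ : Measure α}
    [IsFiniteMeasure μ] [NormedAddCommGroup F] {m K : ℝ≥0} (hm : 1 ≤ m)
    {f : ℕ → α → F} {g : α → F} (hf : ∀ k, AEStronglyMeasurable (f k) μ)
    (hb : ∀ k x, ‖f k x‖ ≤ K)
    (hlim : ∀ᵐ x ∂μ, Tendsto (fun k => f k x) atTop (𝓝 (g x))) :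
    Tendsto (fun k => eLpNorm (f k) m μ) atTop (𝓝 (eLpNorm g m μ)) := by
  have h0 : (m : ℝ≥0∞) ≠ 0 := by exact_mod_cast (zero_lt_one.trans_le hm).ne'
  simp only [eLpNorm_eq_lintegral_rpow_enorm_toReal h0 ENNReal.coe_ne_top, ENNReal.coe_toReal]
  refine ((ENNReal.continuous_rpow_const).tendsto _).comp ?_
  refine tendsto_lintegral_of_dominated_convergence' (fun _ => (K : ℝ≥0∞) ^ (m : ℝ))
    (fun k => (hf k).enorm.pow_const _) (fun k => ?_) ?_ ?_
  · filter_upwards with x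
    gcongr
    rw [enorm_le_coe]
    exact hb k x
  · rw [lintegral_const]
    exact ENNReal.mul_ne_top (ENNReal.rpow_ne_top_of_nonneg m.2 ENNReal.coe_ne_top)
      (measure_ne_top _ _)
  · filter_upwards [hlim] with x hx
    exact ((ENNReal.continuous_rpow_const).tendsto _).comp hx.enorm

/-- The Sobolev inequality for Lipschitz functions supported in the ball of radius two. -/
lemma sobolev_of_lipschitz {n : ℕ} (hn : 0 < n) {m s : ℝ≥0} (hm : 1 ≤ m) (hs : 0 < s)
    (hms : (m : ℝ) < n → (m : ℝ)⁻¹ - (n : ℝ)⁻¹ ≤ (s : ℝ)⁻¹) :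
    ∃ C : ℝ≥0, ∀ (w : En n → ℝ) (K : ℝ≥0), LipschitzWith K w →
      (∀ x ∉ ball (0 : En n) 2, w x = 0) →
      eLpNorm w s volume ≤ C * eLpNorm (fderiv ℝ w) m volume := by
  obtain ⟨C, hC⟩ := sobolev_of_contDiff hn hm hs hms 3
  refine ⟨C, fun w K hw hw0 => ?_⟩
  obtain ⟨W, hW1, hWK, hWlim, hWd, hW0⟩ := exists_contDiff_approx hw
  have hW3 : ∀ k, ∀ x ∉ ball (0 : En n) 3, W k x = 0 := fun k x hx => hW0 k x fun y hy =>
    hw0 y fun hy2 => hx <| by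
      rw [mem_ball] at *
      linarith [dist_triangle x y 0, dist_comm x y]
  have : IsFiniteMeasure (volume.restrict (closedBall (0 : En n) 3)) :=
    isFiniteMeasure_restrict.2 measure_closedBall_lt_top.ne
  have hlim := tendsto_eLpNorm_of_bounded (μ := volume.restrict (closedBall (0 : En n) 3))
    (f := fun k => fderiv ℝ (W k)) (g := fderiv ℝ w) (K := K) hm
    (fun k => (measurable_fderiv ℝ _).aestronglyMeasurable)
    (fun k x => norm_fderiv_le_of_lipschitz ℝ (hWK k)) (ae_restrict_of_ae hWd)
  calc eLpNorm w s volume ≤ atTop.liminf fun k => eLpNorm (W k) s volume :=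
        Lp.eLpNorm_lim_le_liminf_eLpNorm
          (fun k => (hW1 k).continuous.aestronglyMeasurable) _ (Eventually.of_forall hWlim)
    _ ≤ atTop.liminf fun k =>
          C * eLpNorm (fderiv ℝ (W k)) m (volume.restrict (closedBall (0 : En n) 3)) := by
        refine liminf_le_liminf (Eventually.of_forall fun k => ?_)
        rw [eLpNorm_restrict_eq_of_support_subset (f := fderiv ℝ (W k))
          (support_fderiv_subset_closedBall (hW3 k))]
        exact hC _ (hW1 k) (hW3 k)
    _ = C * eLpNorm (fderiv ℝ w) m (volume.restrict (closedBall (0 : En n) 3)) :=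
        (ENNReal.Tendsto.const_mul hlim (Or.inr ENNReal.coe_ne_top)).liminf_eq
    _ ≤ C * eLpNorm (fderiv ℝ w) m volume := by
        gcongr
        exact Measure.restrict_le_self

lemma rpow_lintegral_le_lintegral_rpow {α : Type*} [MeasurableSpace α] {μ : Measure α}
    [IsProbabilityMeasure μ] {m : ℝ≥0} (hm : 1 ≤ m) {h : α → ℝ≥0∞} (hh : AEMeasurable h μ) :
    (∫⁻ t, h t ∂μ) ^ (m : ℝ) ≤ ∫⁻ t, h t ^ (m : ℝ) ∂μ := by
  have hm0 : (0 : ℝ) < m := by exact_mod_cast zero_lt_one.trans_le hm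
  have h1 := eLpNorm_le_eLpNorm_of_exponent_le (μ := μ) (f := h) (p := 1) (q := m)
    (by exact_mod_cast hm) hh.aestronglyMeasurable
  rw [eLpNorm_one_eq_lintegral_enorm, eLpNorm_eq_lintegral_rpow_enorm_toReal
    (by exact_mod_cast (zero_lt_one.trans_le hm).ne') ENNReal.coe_ne_top] at h1
  simp only [enorm_eq_self, ENNReal.coe_toReal] at h1
  calc (∫⁻ t, h t ∂μ) ^ (m : ℝ) ≤ ((∫⁻ t, h t ^ (m : ℝ) ∂μ) ^ (1 / (m : ℝ))) ^ (m : ℝ) := by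
        gcongr
    _ = _ := by rw [← ENNReal.rpow_mul, one_div_mul_cancel hm0.ne', ENNReal.rpow_one]

lemma lintegral_comp_add_smul_le {n : ℕ} {G : En n → ℝ≥0∞} (hG : Measurable G) (b : En n) {c : ℝ}
    (hc : 1 / 2 ≤ c) : ∫⁻ y, G (b + c • y) ≤ 2 ^ n * ∫⁻ y, G y := by
  have hc0 : 0 < c := by linarith
  have h1 : ∫⁻ y, G (b + c • y) = ∫⁻ y, G (b + y) ∂(Measure.map (fun y => c • y) volume) := by
    rw [lintegral_map (f := fun y => G (b + y)) (hG.comp (measurable_const_add b))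
      (measurable_const_smul c)]
  rw [h1, Measure.map_addHaar_smul _ hc0.ne', lintegral_smul_measure,
    lintegral_add_left_eq_self, smul_eq_mul]
  gcongr
  rw [finrank_euclideanSpace_fin, abs_of_pos (by positivity), ← inv_pow]
  calc ENNReal.ofReal (c⁻¹ ^ n) ≤ ENNReal.ofReal (2 ^ n) := by
        gcongr
        rw [inv_le_comm₀ hc0 two_pos]
        linarith
    _ = 2 ^ n := by rw [ENNReal.ofReal_pow zero_le_two, ENNReal.ofReal_ofNat]

lemma enorm_sub_rpow_le_lintegral_segment {n : ℕ} {m : ℝ≥0} (hm : 1 ≤ m) {V : En n → ℝ}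
    (hV : ContDiff ℝ 1 V) {x y : En n} (hx : x ∈ ball (0 : En n) 1) (hy : y ∈ ball (0 : En n) 1) :
    ‖V x - V y‖ₑ ^ (m : ℝ) ≤ 2 ^ (m : ℝ) * ∫⁻ t in Ioc (0 : ℝ) 1,
      (ball (0 : En n) 1).indicator (fun z => ‖fderiv ℝ V z‖ₑ ^ (m : ℝ)) ((1 - t) • x + t • y) := by
  have hprob : IsProbabilityMeasure (volume.restrict (Ioc (0 : ℝ) 1)) := ⟨by simp⟩
  have hcont : Continuous (fderiv ℝ V) := hV.continuous_fderiv one_ne_zero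
  have hpath : Continuous fun t : ℝ => (1 - t) • x + t • y := by fun_prop
  have hderiv : ∀ t ∈ uIcc (0 : ℝ) 1, HasDerivAt (fun t : ℝ => V ((1 - t) • x + t • y))
      (fderiv ℝ V ((1 - t) • x + t • y) (y - x)) t := fun t _ => by
    have h1 : HasDerivAt (fun t : ℝ => (1 - t) • x + t • y) (y - x) t := by
      have := (((hasDerivAt_id t).const_sub 1).smul_const x).add ((hasDerivAt_id t).smul_const y)
      convert! this using 1
      simp [sub_eq_neg_add]
    exact (hV.differentiable one_ne_zero _).hasFDerivAt.comp_hasDerivAt t h1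
  have hFTC := intervalIntegral.integral_eq_sub_of_hasDerivAt hderiv
    (((hcont.comp hpath).clm_apply continuous_const).intervalIntegrable 0 1)
  simp only [sub_self, zero_smul, one_smul, zero_add, sub_zero, add_zero] at hFTC
  rw [intervalIntegral.integral_of_le zero_le_one] at hFTC
  have hnorm : ‖y - x‖ₑ ≤ 2 := by
    rw [← ofReal_norm, ENNReal.ofReal_le_ofNat]
    rw [mem_ball_zero_iff] at hx hy
    linarith [norm_sub_le y x]
  have h1 : ‖V x - V y‖ₑ ≤
      2 * ∫⁻ t in Ioc (0 : ℝ) 1, ‖fderiv ℝ V ((1 - t) • x + t • y)‖ₑ := by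
    rw [← enorm_neg, neg_sub, ← hFTC, ← lintegral_const_mul' _ _ ENNReal.ofNat_ne_top]
    refine (enorm_integral_le_lintegral_enorm _).trans (lintegral_mono fun t => ?_)
    refine (ContinuousLinearMap.le_opENorm _ _).trans ?_
    rw [mul_comm]
    gcongr
  calc ‖V x - V y‖ₑ ^ (m : ℝ)
      ≤ (2 * ∫⁻ t in Ioc (0 : ℝ) 1, ‖fderiv ℝ V ((1 - t) • x + t • y)‖ₑ) ^ (m : ℝ) := by gcongr
    _ = 2 ^ (m : ℝ) * (∫⁻ t in Ioc (0 : ℝ) 1, ‖fderiv ℝ V ((1 - t) • x + t • y)‖ₑ) ^ (m : ℝ) :=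
        ENNReal.mul_rpow_of_nonneg _ _ m.coe_nonneg
    _ ≤ 2 ^ (m : ℝ) *
        ∫⁻ t in Ioc (0 : ℝ) 1, ‖fderiv ℝ V ((1 - t) • x + t • y)‖ₑ ^ (m : ℝ) := by
        gcongr
        exact rpow_lintegral_le_lintegral_rpow hm (hcont.comp hpath).enorm.aemeasurable
    _ = _ := by
        congr 1
        refine setLIntegral_congr_fun measurableSet_Ioc fun t ht => ?_
        have hmem : (1 - t) • x + t • y ∈ ball (0 : En n) 1 :=
          convex_ball (0 : En n) 1 hx hy (by linarith [ht.2]) ht.1.le (by ring)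
        exact (indicator_of_mem hmem (fun z => ‖fderiv ℝ V z‖ₑ ^ (m : ℝ))).symm

lemma lintegral_segment_le {n : ℕ} {G : En n → ℝ≥0∞} (hG : Measurable G) (B : Set (En n)) :
    ∫⁻ x in B, ∫⁻ y in B, ∫⁻ t in Ioc (0 : ℝ) 1, G ((1 - t) • x + t • y) ≤
      2 ^ n * (∫⁻ y, G y) * volume B := by
  have hmeas : Measurable fun z : (En n × En n) × ℝ => G ((1 - z.2) • z.1.1 + z.2 • z.1.2) :=
    hG.comp (by fun_prop)
  have hone : ∀ {c : ℝ} (b : En n), 1 / 2 ≤ c →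
      ∫⁻ y in B, G (b + c • y) ≤ 2 ^ n * ∫⁻ y, G y := fun b hc =>
    (setLIntegral_le_lintegral _ _).trans (lintegral_comp_add_smul_le hG b hc)
  calc ∫⁻ x in B, ∫⁻ y in B, ∫⁻ t in Ioc (0 : ℝ) 1, G ((1 - t) • x + t • y)
      = ∫⁻ x in B, ∫⁻ t in Ioc (0 : ℝ) 1, ∫⁻ y in B, G ((1 - t) • x + t • y) := by
        refine lintegral_congr fun x => lintegral_lintegral_swap ?_
        exact (hmeas.comp (f := fun z : En n × ℝ => ((x, z.1), z.2)) (by fun_prop)).aemeasurable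
    _ = ∫⁻ t in Ioc (0 : ℝ) 1, ∫⁻ x in B, ∫⁻ y in B, G ((1 - t) • x + t • y) := by
        refine lintegral_lintegral_swap (Measurable.aemeasurable ?_)
        exact (hmeas.comp (f := fun z : (En n × ℝ) × En n => ((z.1.1, z.2), z.1.2))
          (by fun_prop)).lintegral_prod_right'
    _ ≤ ∫⁻ t in Ioc (0 : ℝ) 1, 2 ^ n * (∫⁻ y, G y) * volume B := by
        refine lintegral_mono fun t => ?_
        rcases le_total (1 / 2) t with ht | ht
        · calc ∫⁻ x in B, ∫⁻ y in B, G ((1 - t) • x + t • y)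
              ≤ ∫⁻ x in B, 2 ^ n * ∫⁻ y, G y := lintegral_mono fun x => hone _ ht
            _ = _ := by rw [setLIntegral_const]
        · calc ∫⁻ x in B, ∫⁻ y in B, G ((1 - t) • x + t • y)
              = ∫⁻ y in B, ∫⁻ x in B, G ((1 - t) • x + t • y) :=
                lintegral_lintegral_swap (hG.comp
                  (f := fun z : En n × En n => (1 - t) • z.1 + t • z.2)
                  (by fun_prop)).aemeasurable
            _ ≤ ∫⁻ y in B, 2 ^ n * ∫⁻ y, G y := lintegral_mono fun y => by
                simp_rw [add_comm _ (t • y)]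
                exact hone _ (by linarith)
            _ = _ := by rw [setLIntegral_const]
    _ = _ := by simp

/-- The `L^m` Poincaré inequality on the unit ball for `C¹` functions. -/
lemma poincare_of_contDiff {n : ℕ} {m : ℝ≥0} (hm : 1 ≤ m) :
    ∃ C : ℝ≥0, ∀ V : En n → ℝ, ContDiff ℝ 1 V →
      eLpNorm (fun x => V x - ⨍ y in ball (0 : En n) 1, V y) m
        (volume.restrict (ball (0 : En n) 1)) ≤
      C * eLpNorm (fderiv ℝ V) m (volume.restrict (ball (0 : En n) 1)) := by
  set B := ball (0 : En n) 1 with hB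
  have hm0 : (0 : ℝ) < m := by exact_mod_cast zero_lt_one.trans_le hm
  have hfin : volume B ≠ ⊤ := measure_ball_lt_top.ne
  have hpos : volume B ≠ 0 := (measure_ball_pos volume _ one_pos).ne'
  refine ⟨((2 : ℝ≥0) ^ (m : ℝ) * 2 ^ n) ^ (1 / (m : ℝ)), fun V hV => ?_⟩
  have hcont : Continuous (fderiv ℝ V) := hV.continuous_fderiv one_ne_zero
  have : Fact (volume B < ⊤) := ⟨hfin.lt_top⟩
  have : NeZero (volume.restrict B) := ⟨by rwa [Ne, Measure.restrict_eq_zero]⟩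
  have hVint : Integrable V (volume.restrict B) :=
    ((hV.continuous.locallyIntegrable (μ := volume)).integrableOn_isCompact
      (isCompact_closedBall (0 : En n) 1)).mono_set ball_subset_closedBall
  set ν := ((volume.restrict B) univ)⁻¹ • volume.restrict B with hν
  have hνint : Integrable V ν := hVint.to_average
  set G : En n → ℝ≥0∞ := B.indicator fun z => ‖fderiv ℝ V z‖ₑ ^ (m : ℝ) with hG
  have hGm : Measurable G :=
    (hcont.measurable.enorm.pow_const _).indicator measurableSet_ball
  have hGint : ∫⁻ z, G z = ∫⁻ z in B, ‖fderiv ℝ V z‖ₑ ^ (m : ℝ) :=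
    lintegral_indicator measurableSet_ball _
  have hpt : ∀ x ∈ B, ‖V x - ⨍ y in B, V y‖ₑ ^ (m : ℝ) ≤
      2 ^ (m : ℝ) * (volume B)⁻¹ *
        ∫⁻ y in B, ∫⁻ t in Ioc (0 : ℝ) 1, G ((1 - t) • x + t • y) := fun x hx => by
    have h1 : V x - ⨍ y in B, V y = ∫ y, (V x - V y) ∂ν := by
      rw [integral_sub (integrable_const _) hνint]
      rw [integral_const, probReal_univ, one_smul]
      rfl
    rw [h1]
    calc ‖∫ y, (V x - V y) ∂ν‖ₑ ^ (m : ℝ) ≤ (∫⁻ y, ‖V x - V y‖ₑ ∂ν) ^ (m : ℝ) := by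
          gcongr
          exact enorm_integral_le_lintegral_enorm _
      _ ≤ ∫⁻ y, ‖V x - V y‖ₑ ^ (m : ℝ) ∂ν :=
          rpow_lintegral_le_lintegral_rpow hm
            (continuous_const.sub hV.continuous).enorm.aemeasurable
      _ = (volume B)⁻¹ * ∫⁻ y in B, ‖V x - V y‖ₑ ^ (m : ℝ) := by
          rw [hν, lintegral_smul_measure, smul_eq_mul, Measure.restrict_apply_univ]
      _ ≤ (volume B)⁻¹ * ∫⁻ y in B, 2 ^ (m : ℝ) *
            ∫⁻ t in Ioc (0 : ℝ) 1, G ((1 - t) • x + t • y) := by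
          gcongr 1
          exact setLIntegral_mono' measurableSet_ball fun y hy =>
            enorm_sub_rpow_le_lintegral_segment hm hV hx hy
      _ = _ := by
          rw [lintegral_const_mul' (2 ^ (m : ℝ) : ℝ≥0∞) _
            (ENNReal.rpow_ne_top_of_nonneg m.coe_nonneg ENNReal.ofNat_ne_top)]
          ring
  have hmain : ∫⁻ x in B, ‖V x - ⨍ y in B, V y‖ₑ ^ (m : ℝ) ≤
      2 ^ (m : ℝ) * 2 ^ n * ∫⁻ z in B, ‖fderiv ℝ V z‖ₑ ^ (m : ℝ) := by
    calc ∫⁻ x in B, ‖V x - ⨍ y in B, V y‖ₑ ^ (m : ℝ)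
        ≤ ∫⁻ x in B, 2 ^ (m : ℝ) * (volume B)⁻¹ *
            ∫⁻ y in B, ∫⁻ t in Ioc (0 : ℝ) 1, G ((1 - t) • x + t • y) :=
          setLIntegral_mono' measurableSet_ball hpt
      _ = 2 ^ (m : ℝ) * (volume B)⁻¹ * ∫⁻ x in B,
            ∫⁻ y in B, ∫⁻ t in Ioc (0 : ℝ) 1, G ((1 - t) • x + t • y) :=
          lintegral_const_mul' _ _ (ENNReal.mul_ne_top
            (ENNReal.rpow_ne_top_of_nonneg m.coe_nonneg ENNReal.ofNat_ne_top)
            (ENNReal.inv_ne_top.2 hpos))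
      _ ≤ 2 ^ (m : ℝ) * (volume B)⁻¹ * (2 ^ n * (∫⁻ y, G y) * volume B) := by
          gcongr
          exact lintegral_segment_le hGm B
      _ = 2 ^ (m : ℝ) * 2 ^ n * (∫⁻ y, G y) * ((volume B)⁻¹ * volume B) := by ring
      _ = _ := by rw [ENNReal.inv_mul_cancel hpos hfin, mul_one, hGint]
  have h0 : (m : ℝ≥0∞) ≠ 0 := by exact_mod_cast (zero_lt_one.trans_le hm).ne'
  simp only [eLpNorm_eq_lintegral_rpow_enorm_toReal h0 ENNReal.coe_ne_top, ENNReal.coe_toReal]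
  calc _ ≤ (2 ^ (m : ℝ) * 2 ^ n * ∫⁻ z in B, ‖fderiv ℝ V z‖ₑ ^ (m : ℝ)) ^ (1 / (m : ℝ)) := by
        gcongr
    _ = _ := by
        rw [ENNReal.mul_rpow_of_nonneg _ _ (by positivity),
          ENNReal.coe_rpow_of_nonneg _ (by positivity), ENNReal.coe_mul,
          ENNReal.coe_rpow_of_nonneg _ m.coe_nonneg]
        simp

open EuclideanGeometry in
lemma inversion_zero_one {n : ℕ} (x : En n) : inversion (0 : En n) 1 x = (1 / ‖x‖) ^ 2 • x := by
  simp [inversion]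

open EuclideanGeometry in
lemma measurable_inversion_zero_one {n : ℕ} : Measurable (inversion (0 : En n) 1) := by
  have : inversion (0 : En n) 1 = fun x => (1 / ‖x‖) ^ 2 • x := funext inversion_zero_one
  rw [this]
  exact ((measurable_const.div measurable_norm).pow_const 2).smul measurable_id

open EuclideanGeometry in
/-- The retraction of `ℝⁿ` onto the closed unit ball which reflects the exterior by inversion. -/
def ballReflection {n : ℕ} (x : En n) : En n :=
  if ‖x‖ ≤ 1 then x else inversion 0 1 x

lemma norm_ballReflection_le {n : ℕ} (x : En n) : ‖ballReflection x‖ ≤ 1 := by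
  rw [ballReflection]
  split_ifs with h
  · exact h
  · push Not at h
    rw [inversion_zero_one, norm_smul, Real.norm_of_nonneg (by positivity), one_div, inv_pow,
      inv_mul_le_iff₀ (by positivity)]
    nlinarith

lemma norm_sub_inversion_le {n : ℕ} {x y : En n} (hx : ‖x‖ ≤ 1) (hy : 1 < ‖y‖) :
    ‖x - (1 / ‖y‖) ^ 2 • y‖ ≤ ‖x - y‖ := by
  have hy0 : ‖y‖ ≠ 0 := by positivity
  refine le_of_sq_le_sq ?_ (norm_nonneg _)
  rw [norm_sub_sq_real, norm_sub_sq_real, real_inner_smul_right, norm_smul,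
    Real.norm_of_nonneg (by positivity)]
  have hinner : inner ℝ x y ≤ ‖y‖ :=
    (real_inner_le_norm x y).trans (mul_le_of_le_one_left (norm_nonneg _) hx)
  have hs : (1 / ‖y‖) ^ 2 ≤ 1 := pow_le_one₀ (by positivity) ((div_le_one (by positivity)).2 hy.le)
  have h1 : ((1 / ‖y‖) ^ 2 * ‖y‖) ^ 2 = (1 / ‖y‖) ^ 2 := by field_simp
  have h2 : (1 / ‖y‖) ^ 2 * ‖y‖ ^ 2 = 1 := by field_simp
  rw [h1]
  nlinarith [mul_nonneg (sub_nonneg.2 hs) (by nlinarith : 0 ≤ ‖y‖ ^ 2 + 1 - 2 * inner ℝ x y)]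

lemma lipschitzWith_ballReflection {n : ℕ} : LipschitzWith 1 (ballReflection (n := n)) := by
  refine LipschitzWith.of_dist_le_mul fun x y => ?_
  rw [NNReal.coe_one, one_mul, ballReflection, ballReflection]
  split_ifs with hx hy hy
  · exact le_rfl
  · rw [inversion_zero_one, dist_eq_norm, dist_eq_norm]
    exact norm_sub_inversion_le hx (not_le.1 hy)
  · rw [inversion_zero_one, dist_comm, dist_comm x, dist_eq_norm, dist_eq_norm]
    exact norm_sub_inversion_le hy (not_le.1 hx)
  · push Not at hx hy
    have hx0 : x ≠ 0 := norm_pos_iff.1 (by linarith)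
    have hy0 : y ≠ 0 := norm_pos_iff.1 (by linarith)
    rw [EuclideanGeometry.dist_inversion_inversion hx0 hy0, dist_zero_right, dist_zero_right]
    refine mul_le_of_le_one_left dist_nonneg ?_
    rw [one_pow, div_le_one (by positivity)]
    nlinarith

open EuclideanGeometry in
lemma map_inversion_restrict_le {n : ℕ} :
    Measure.map (inversion (0 : En n) 1) (volume.restrict {x : En n | 1 < ‖x‖ ∧ ‖x‖ ≤ 2}) ≤
      (4 : ℝ≥0∞) ^ n • volume.restrict (ball (0 : En n) 1) := by
  have hmeas := measurable_inversion_zero_one (n := n)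
  have hA : MeasurableSet {x : En n | 1 < ‖x‖ ∧ ‖x‖ ≤ 2} :=
    (measurableSet_lt measurable_const measurable_norm).inter
      (measurableSet_le measurable_norm measurable_const)
  refine Measure.le_iff.2 fun S hS => ?_
  rw [Measure.map_apply hmeas hS, Measure.restrict_apply (hmeas hS), Measure.smul_apply,
    Measure.restrict_apply hS, smul_eq_mul]
  set T := inversion (0 : En n) 1 ⁻¹' S ∩ {x : En n | 1 < ‖x‖ ∧ ‖x‖ ≤ 2} with hT
  have hTm : MeasurableSet T := (hmeas hS).inter hA
  have hT0 : ∀ x ∈ T, x ≠ 0 := fun x hx => norm_pos_iff.1 (by linarith [hx.2.1])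
  have himage : inversion (0 : En n) 1 '' T ⊆ S ∩ ball 0 1 := by
    rintro _ ⟨x, hx, rfl⟩
    refine ⟨hx.1, ?_⟩
    have h1 : 1 < ‖x‖ := hx.2.1
    rw [mem_ball, dist_inversion_center, dist_zero_right, one_pow]
    exact (div_lt_one (by linarith)).2 h1
  have hjac := lintegral_abs_det_fderiv_eq_addHaar_image volume hTm
    (fun x hx => (hasFDerivAt_inversion (R := 1) (hT0 x hx)).hasFDerivWithinAt)
    (inversion_injective (0 : En n) one_ne_zero).injOn
  have hdet : ∀ x ∈ T, (4 : ℝ≥0∞)⁻¹ ^ n ≤ ENNReal.ofReal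
      |(((1 / dist x 0) ^ 2 • ((Submodule.span ℝ {x - 0})ᗮ.reflection : En n →L[ℝ] En n))).det| := by
    intro x hx
    have h2 : ‖x‖ ≤ 2 := hx.2.2
    have h1 : 1 < ‖x‖ := hx.2.1
    have heq : |(((1 / dist x 0) ^ 2 •
        ((Submodule.span ℝ {x - 0})ᗮ.reflection : En n →L[ℝ] En n))).det| =
        ((1 / ‖x‖) ^ 2) ^ n := by
      rw [ContinuousLinearMap.det, ContinuousLinearMap.toLinearMap_smul, LinearMap.det_smul,
        finrank_euclideanSpace_fin, dist_zero_right, abs_mul, abs_of_nonneg (by positivity)]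
      have := (Submodule.span ℝ {x - 0})ᗮ.det_reflection
      erw [this]
      simp
    rw [heq, ENNReal.ofReal_pow (by positivity)]
    gcongr
    rw [← ENNReal.ofReal_ofNat, ← ENNReal.ofReal_inv_of_pos (by norm_num)]
    refine ENNReal.ofReal_le_ofReal ?_
    rw [one_div, inv_pow]
    exact inv_anti₀ (by positivity) (by nlinarith)
  calc volume T = 4 ^ n * ((4 : ℝ≥0∞)⁻¹ ^ n * volume T) := by
        rw [← mul_assoc, ← mul_pow, ENNReal.mul_inv_cancel (by norm_num) (by norm_num), one_pow,
          one_mul]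
    _ ≤ 4 ^ n * volume (inversion (0 : En n) 1 '' T) := by
        gcongr
        rw [← hjac, ← setLIntegral_const]
        exact setLIntegral_mono' hTm hdet
    _ ≤ _ := by gcongr

lemma lipschitzOnWith_mul_of_bounded {n : ℕ} {f g : En n → ℝ} {S : Set (En n)} {A B Kf Kg : ℝ≥0}
    (hf : LipschitzOnWith Kf f S) (hg : LipschitzOnWith Kg g S) (hA : ∀ x ∈ S, |f x| ≤ A)
    (hB : ∀ x ∈ S, |g x| ≤ B) : LipschitzOnWith (A * Kg + B * Kf) (fun x => f x * g x) S := by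
  refine LipschitzOnWith.of_dist_le_mul fun x hx y hy => ?_
  have h1 := hf.dist_le_mul x hx y hy
  have h2 := hg.dist_le_mul x hx y hy
  rw [Real.dist_eq] at *
  have heq : f x * g x - f y * g y = f x * (g x - g y) + g y * (f x - f y) := by ring
  rw [heq]
  refine (abs_add_le _ _).trans ?_
  rw [abs_mul, abs_mul]
  push_cast
  have h3 := mul_le_mul (hA x hx) h2 (abs_nonneg _) A.2
  have h4 := mul_le_mul (hB y hy) h1 (abs_nonneg _) B.2
  linarith

lemma norm_fderiv_mul_le {n : ℕ} {f g : En n → ℝ} {x : En n} {M : ℝ}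
    (hf : DifferentiableAt ℝ f x) (hg : DifferentiableAt ℝ g x) (hf1 : |f x| ≤ 1)
    (hM : ‖fderiv ℝ f x‖ ≤ M) :
    ‖fderiv ℝ (fun y => f y * g y) x‖ ≤ ‖fderiv ℝ g x‖ + M * ‖g x‖ := by
  rw [fderiv_fun_mul hf hg]
  refine (norm_add_le _ _).trans ?_
  rw [norm_smul, norm_smul, Real.norm_eq_abs, mul_comm ‖g x‖]
  gcongr
  exact mul_le_of_le_one_left (norm_nonneg _) hf1

open EuclideanGeometry in
lemma norm_fderiv_comp_inversion_le {n : ℕ} {V : En n → ℝ} (hV : Differentiable ℝ V) {x : En n}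
    (hx : 1 < ‖x‖) :
    DifferentiableAt ℝ (fun y => V (inversion 0 1 y)) x ∧
      ‖fderiv ℝ (fun y => V (inversion 0 1 y)) x‖ ≤ ‖fderiv ℝ V (inversion 0 1 x)‖ := by
  have hx0 : x ≠ 0 := norm_pos_iff.1 (by linarith)
  have h := (hV (inversion 0 1 x)).hasFDerivAt.comp x (hasFDerivAt_inversion (R := 1) hx0)
  refine ⟨h.differentiableAt, ?_⟩
  have h' : fderiv ℝ (fun y => V (inversion 0 1 y)) x = _ := h.fderiv
  rw [h']
  refine (ContinuousLinearMap.opNorm_comp_le _ _).trans ?_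
  refine mul_le_of_le_one_right (norm_nonneg _) ?_
  rw [norm_smul, dist_zero_right, Real.norm_of_nonneg (by positivity)]
  refine mul_le_one₀ (pow_le_one₀ (by positivity) ((div_le_one (by positivity)).2 hx.le))
    (norm_nonneg _) ?_
  refine ContinuousLinearMap.opNorm_le_bound _ zero_le_one fun y => ?_
  rw [one_mul]
  exact (LinearIsometryEquiv.norm_map _ y).le

lemma exists_bound_fderiv_contDiffBump {n : ℕ} {c : En n} (η : ContDiffBump c) :
    ∃ M : ℝ≥0, ∀ x, ‖fderiv ℝ η x‖ ≤ M := by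
  obtain ⟨M, hM⟩ := (η.hasCompactSupport.fderiv (𝕜 := ℝ)).exists_bound_of_continuous
    (η.contDiff.continuous_fderiv (n := 1) one_ne_zero)
  exact ⟨M.toNNReal, fun x => (hM x).trans (Real.le_coe_toNNReal M)⟩

lemma lipschitzWith_contDiffBump {n : ℕ} {c : En n} (η : ContDiffBump c) {M : ℝ≥0}
    (hM : ∀ x, ‖fderiv ℝ η x‖ ≤ M) : LipschitzWith M η :=
  lipschitzWith_of_nnnorm_fderiv_le (η.contDiff.differentiable (n := 1) one_ne_zero) hM

lemma abs_contDiffBump_le_one {n : ℕ} {c : En n} (η : ContDiffBump c) (x : En n) : |η x| ≤ 1 := by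
  rw [abs_of_nonneg η.nonneg]
  exact η.le_one

open EuclideanGeometry in
/-- A continuously differentiable function on the unit ball has an extension, supported in the ball
of radius two, whose gradient is controlled by the values of the function on the unit ball. -/
lemma exists_extension {n : ℕ} (hn : 0 < n) {m : ℝ≥0} (hm : 1 ≤ m) : ∃ C : ℝ≥0,
    ∀ (V : En n → ℝ) (K : ℝ≥0), ContDiff ℝ 1 V → LipschitzWith K V →
      ∃ (w : En n → ℝ) (K' : ℝ≥0), LipschitzWith K' w ∧ (∀ x ∉ ball (0 : En n) 2, w x = 0) ∧
        EqOn w V (ball 0 1) ∧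
        eLpNorm (fderiv ℝ w) m volume ≤ C * (eLpNorm V m (volume.restrict (ball 0 1)) +
          eLpNorm (fderiv ℝ V) m (volume.restrict (ball 0 1))) := by
  have : Nontrivial (En n) := by
    have : Nonempty (Fin n) := ⟨⟨0, hn⟩⟩
    infer_instance
  let η : ContDiffBump (0 : En n) := ⟨1, 2, one_pos, one_lt_two⟩
  obtain ⟨M, hM⟩ := exists_bound_fderiv_contDiffBump η
  obtain ⟨D, hD⟩ : ∃ D : ℝ≥0, (((4 : ℝ≥0∞) ^ n) ^ (1 / (m : ℝ≥0∞)).toReal) = D :=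
    ⟨_, (ENNReal.coe_toNNReal (ENNReal.rpow_ne_top_of_nonneg (by positivity) (by simp))).symm⟩
  refine ⟨1 + D * (1 + M), fun V K hV hK => ?_⟩
  have hVd : Differentiable ℝ V := hV.differentiable one_ne_zero
  have hηd : Differentiable ℝ η := η.contDiff.differentiable (n := 1) one_ne_zero
  set w : En n → ℝ := fun x => η x * V (ballReflection x) with hw
  have hη0 : ∀ x ∉ ball (0 : En n) 2, η x = 0 := fun x hx => η.zero_of_le_dist (by simpa using hx)
  have hw0 : ∀ x ∉ ball (0 : En n) 2, w x = 0 := fun x hx => by rw [hw]; simp [hη0 x hx]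
  have hwV : EqOn w V (ball 0 1) := fun x hx => by
    have hx1 : ‖x‖ ≤ 1 := by simpa using (mem_ball_zero_iff.1 hx).le
    rw [hw]
    simp [ballReflection, hx1, η.one_of_mem_closedBall (x := x) (by simpa [η] using hx1)]
  have hbd : ∀ x, |V (ballReflection x)| ≤ (‖V 0‖₊ + K : ℝ≥0) := fun x => by
    have h1 := hK.dist_le_mul (ballReflection x) 0
    rw [dist_zero_right, Real.dist_eq] at h1
    have h2 := norm_ballReflection_le x
    have h3 := abs_sub_abs_le_abs_sub (V (ballReflection x)) (V 0)
    have h4 : (K : ℝ) * ‖ballReflection x‖ ≤ K := mul_le_of_le_one_right K.2 h2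
    push_cast
    rw [Real.norm_eq_abs]
    linarith
  refine ⟨w, 1 * (K * 1) + (‖V 0‖₊ + K) * M, ?_, hw0, hwV, ?_⟩
  · rw [← lipschitzOnWith_univ]
    exact lipschitzOnWith_mul_of_bounded (lipschitzWith_contDiffBump η hM).lipschitzOnWith
      (hK.comp lipschitzWith_ballReflection).lipschitzOnWith
      (fun x _ => abs_contDiffBump_le_one η x) (fun x _ => hbd x)
  set A : Set (En n) := {x : En n | 1 < ‖x‖ ∧ ‖x‖ ≤ 2} with hAdef
  have hA : MeasurableSet A :=
    (measurableSet_lt measurable_const measurable_norm).inter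
      (measurableSet_le measurable_norm measurable_const)
  set g : En n → ℝ := fun x => ‖fderiv ℝ V x‖ + M * ‖V x‖ with hg
  have hgc : Continuous g :=
    (hV.continuous_fderiv one_ne_zero).norm.add (continuous_const.mul hV.continuous.norm)
  have hsphere : ∀ᵐ x : En n, ‖x‖ ≠ 1 := by
    rw [ae_iff]
    have : {x : En n | ¬ ‖x‖ ≠ 1} = sphere 0 1 := by ext; simp
    rw [this]
    exact Measure.addHaar_sphere _ _ _
  have hpt : ∀ᵐ x : En n, ‖fderiv ℝ w x‖ ≤
      (ball (0 : En n) 1).indicator (fun x => ‖fderiv ℝ V x‖) x +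
        A.indicator (g ∘ inversion 0 1) x := by
    filter_upwards [hsphere] with x hx1
    rcases lt_or_gt_of_ne hx1 with hx | hx
    · have hxb : x ∈ ball (0 : En n) 1 := by simpa using hx
      have hxA : x ∉ A := fun h => by linarith [h.1]
      rw [(hwV.eventuallyEq_of_mem (isOpen_ball.mem_nhds hxb)).fderiv_eq,
        indicator_of_mem hxb, indicator_of_notMem hxA, add_zero]
    · have hxb : x ∉ ball (0 : En n) 1 := by simpa using hx.le
      rw [indicator_of_notMem hxb, zero_add]
      by_cases hx2 : ‖x‖ ≤ 2
      · rw [indicator_of_mem (show x ∈ A from ⟨hx, hx2⟩)]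
        have hev : w =ᶠ[𝓝 x] fun y => η y * V (inversion 0 1 y) := by
          filter_upwards [(isOpen_lt continuous_const continuous_norm).mem_nhds hx] with y hy
          simp only [hw, ballReflection, if_neg (not_le.2 hy)]
        rw [hev.fderiv_eq]
        obtain ⟨hd, hle⟩ := norm_fderiv_comp_inversion_le hVd hx
        refine (norm_fderiv_mul_le (hηd x) hd (abs_contDiffBump_le_one η x) (hM x)).trans ?_
        simp only [hg, Function.comp]
        gcongr
      · have : x ∉ Function.support (fderiv ℝ w) := fun h =>
          hx2 (by simpa using support_fderiv_subset_closedBall hw0 h)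
        rw [Function.notMem_support.1 this, norm_zero]
        exact indicator_nonneg (fun y _ => by simp only [hg, Function.comp]; positivity) _
  have hm1 : (1 : ℝ≥0∞) ≤ m := by exact_mod_cast hm
  have hinv := measurable_inversion_zero_one (n := n)
  have hAE : AEStronglyMeasurable V (volume.restrict (ball (0 : En n) 1)) :=
    hV.continuous.aestronglyMeasurable
  have hdAE : AEStronglyMeasurable (fun x => ‖fderiv ℝ V x‖)
      (volume.restrict (ball (0 : En n) 1)) :=
    (hV.continuous_fderiv one_ne_zero).norm.aestronglyMeasurable
  have hgnorm : eLpNorm g m (volume.restrict (ball 0 1)) ≤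
      (1 + M) * (eLpNorm V m (volume.restrict (ball 0 1)) +
          eLpNorm (fderiv ℝ V) m (volume.restrict (ball 0 1))) := by
    calc eLpNorm g m (volume.restrict (ball 0 1))
        ≤ eLpNorm (fun x => ‖fderiv ℝ V x‖) m (volume.restrict (ball 0 1)) +
          eLpNorm ((M : ℝ) • fun x => ‖V x‖) m (volume.restrict (ball 0 1)) :=
          eLpNorm_add_le hdAE (hAE.norm.const_mul _) hm1
      _ = eLpNorm (fderiv ℝ V) m (volume.restrict (ball 0 1)) +
          M * eLpNorm V m (volume.restrict (ball 0 1)) := by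
          rw [eLpNorm_const_smul, eLpNorm_norm, eLpNorm_norm]
          simp
      _ ≤ _ := by
          rw [mul_add, add_comm]
          gcongr
          · exact le_add_self
          · exact le_mul_of_one_le_left' le_self_add
  calc eLpNorm (fderiv ℝ w) m volume
      ≤ eLpNorm (fun x => (ball (0 : En n) 1).indicator (fun x => ‖fderiv ℝ V x‖) x +
        A.indicator (g ∘ inversion 0 1) x) m volume := eLpNorm_mono_ae_real hpt
    _ ≤ eLpNorm ((ball (0 : En n) 1).indicator (fun x => ‖fderiv ℝ V x‖)) m volume +
        eLpNorm (A.indicator (g ∘ inversion 0 1)) m volume := by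
        refine eLpNorm_add_le ?_ ?_ hm1
        · exact ((hV.continuous_fderiv one_ne_zero).norm.measurable.indicator
            measurableSet_ball).aestronglyMeasurable
        · exact ((hgc.measurable.comp hinv).indicator hA).aestronglyMeasurable
    _ = eLpNorm (fderiv ℝ V) m (volume.restrict (ball 0 1)) +
        eLpNorm g m (Measure.map (inversion 0 1) (volume.restrict A)) := by
        rw [eLpNorm_indicator_eq_eLpNorm_restrict measurableSet_ball,
          eLpNorm_indicator_eq_eLpNorm_restrict hA, eLpNorm_norm,
          eLpNorm_map_measure hgc.aestronglyMeasurable hinv.aemeasurable]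
    _ ≤ eLpNorm (fderiv ℝ V) m (volume.restrict (ball 0 1)) +
        D * eLpNorm g m (volume.restrict (ball 0 1)) := by
        gcongr
        refine (eLpNorm_mono_measure g map_inversion_restrict_le).trans ?_
        rw [eLpNorm_smul_measure_of_ne_top ENNReal.coe_ne_top, smul_eq_mul, hD]
    _ ≤ eLpNorm (fderiv ℝ V) m (volume.restrict (ball 0 1)) +
        D * ((1 + M) * (eLpNorm V m (volume.restrict (ball 0 1)) +
          eLpNorm (fderiv ℝ V) m (volume.restrict (ball 0 1)))) := by gcongr
    _ ≤ _ := by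
        push_cast
        rw [add_mul 1 ((D : ℝ≥0∞) * (1 + M)), one_mul, mul_assoc]
        gcongr
        exact le_add_self

/-- The Sobolev–Poincaré inequality on the unit ball for smooth functions. -/
lemma sobolev_poincare_of_contDiff {n : ℕ} (hn : 0 < n) {m s : ℝ≥0} (hm : 1 ≤ m) (hs : 0 < s)
    (hms : (m : ℝ) < n → (m : ℝ)⁻¹ - (n : ℝ)⁻¹ ≤ (s : ℝ)⁻¹) :
    ∃ C : ℝ≥0, ∀ (V : En n → ℝ) (K : ℝ≥0), ContDiff ℝ 1 V → LipschitzWith K V →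
      eLpNorm (fun x => V x - ⨍ y in ball (0 : En n) 1, V y) s (volume.restrict (ball 0 1)) ≤
        C * eLpNorm (fderiv ℝ V) m (volume.restrict (ball 0 1)) := by
  obtain ⟨C₁, hC₁⟩ := sobolev_of_lipschitz hn hm hs hms
  obtain ⟨C₂, hC₂⟩ := exists_extension hn hm
  obtain ⟨C₃, hC₃⟩ := poincare_of_contDiff (n := n) hm
  refine ⟨C₁ * (C₂ * (C₃ + 1)), fun V K hV hK => ?_⟩
  set c := ⨍ y in ball (0 : En n) 1, V y
  obtain ⟨w, K', hw, hw0, hwV, hle⟩ := hC₂ (fun x => V x - c) K (hV.sub contDiff_const)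
    (LipschitzWith.of_dist_le_mul fun x y => by simpa using hK.dist_le_mul x y)
  have hfd : fderiv ℝ (fun x => V x - c) = fderiv ℝ V := by
    ext1 x
    exact fderiv_sub_const c
  rw [hfd] at hle
  calc eLpNorm (fun x => V x - c) s (volume.restrict (ball 0 1))
      = eLpNorm w s (volume.restrict (ball 0 1)) := by
        refine eLpNorm_congr_ae ?_
        filter_upwards [ae_restrict_mem measurableSet_ball] with x hx using (hwV hx).symm
    _ ≤ eLpNorm w s volume := eLpNorm_mono_measure _ Measure.restrict_le_self
    _ ≤ C₁ * eLpNorm (fderiv ℝ w) m volume := hC₁ w K' hw hw0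
    _ ≤ C₁ * (C₂ * (C₃ * eLpNorm (fderiv ℝ V) m (volume.restrict (ball 0 1)) +
          eLpNorm (fderiv ℝ V) m (volume.restrict (ball 0 1)))) := by
        gcongr
        refine hle.trans ?_
        gcongr
        exact hC₃ V hV
    _ = _ := by push_cast; ring

/-- The Sobolev–Poincaré inequality on the unit ball for Lipschitz functions. -/
lemma sobolev_poincare_of_lipschitz {n : ℕ} (hn : 0 < n) {m s : ℝ≥0} (hm : 1 ≤ m) (hs : 0 < s)
    (hms : (m : ℝ) < n → (m : ℝ)⁻¹ - (n : ℝ)⁻¹ ≤ (s : ℝ)⁻¹) :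
    ∃ C : ℝ≥0, ∀ (V : En n → ℝ) (K : ℝ≥0), LipschitzWith K V →
      eLpNorm (fun x => V x - ⨍ y in ball (0 : En n) 1, V y) s (volume.restrict (ball 0 1)) ≤
        C * eLpNorm (fderiv ℝ V) m (volume.restrict (ball 0 1)) := by
  obtain ⟨C, hC⟩ := sobolev_poincare_of_contDiff hn hm hs hms
  refine ⟨C, fun V K hV => ?_⟩
  obtain ⟨W, hW1, hWK, hWlim, hWd, -⟩ := exists_contDiff_approx hV
  have : IsFiniteMeasure (volume.restrict (ball (0 : En n) 1)) :=
    isFiniteMeasure_restrict.2 measure_ball_lt_top.ne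
  have hlim := tendsto_eLpNorm_of_bounded (μ := volume.restrict (ball (0 : En n) 1))
    (f := fun k => fderiv ℝ (W k)) (g := fderiv ℝ V) (K := K) hm
    (fun k => (measurable_fderiv ℝ _).aestronglyMeasurable)
    (fun k x => norm_fderiv_le_of_lipschitz ℝ (hWK k)) (ae_restrict_of_ae hWd)
  obtain ⟨B, hB⟩ := (hWlim 0).abs.bddAbove_range
  have havg : Tendsto (fun k => ⨍ y in ball (0 : En n) 1, W k y) atTop
      (𝓝 (⨍ y in ball (0 : En n) 1, V y)) := by
    simp only [setAverage_eq]
    refine Tendsto.const_smul (tendsto_integral_of_dominated_convergence (fun _ => B + K)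
      (fun k => (hW1 k).continuous.aestronglyMeasurable) (integrable_const _) (fun k => ?_)
      (Eventually.of_forall hWlim)) _
    filter_upwards [ae_restrict_mem measurableSet_ball] with x hx
    have h1 := (hWK k).dist_le_mul x 0
    have h2 : |W k 0| ≤ B := hB ⟨k, rfl⟩
    rw [mem_ball] at hx
    rw [Real.dist_eq] at h1
    have h3 := abs_sub_abs_le_abs_sub (W k x) (W k 0)
    have h4 : (K : ℝ) * dist x 0 ≤ K := mul_le_of_le_one_right K.2 hx.le
    rw [Real.norm_eq_abs]
    linarith
  calc eLpNorm (fun x => V x - ⨍ y in ball (0 : En n) 1, V y) s (volume.restrict (ball 0 1))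
      ≤ atTop.liminf fun k => eLpNorm (fun x => W k x - ⨍ y in ball (0 : En n) 1, W k y) s
          (volume.restrict (ball 0 1)) :=
        Lp.eLpNorm_lim_le_liminf_eLpNorm
          (fun k => ((hW1 k).continuous.sub continuous_const).aestronglyMeasurable) _
          (Eventually.of_forall fun x => (hWlim x).sub havg)
    _ ≤ atTop.liminf fun k =>
          C * eLpNorm (fderiv ℝ (W k)) m (volume.restrict (ball (0 : En n) 1)) :=
        liminf_le_liminf (Eventually.of_forall fun k => hC _ K (hW1 k) (hWK k))
    _ = C * eLpNorm (fderiv ℝ V) m (volume.restrict (ball (0 : En n) 1)) :=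
        (ENNReal.Tendsto.const_mul hlim (Or.inr ENNReal.coe_ne_top)).liminf_eq

lemma capP_nonneg {n : ℕ} (m : ℝ) (E O : Set (En n)) : 0 ≤ capP m E O := by
  refine Real.sInf_nonneg ?_
  rintro _ ⟨u, -, rfl⟩
  exact integral_nonneg fun x => Real.rpow_nonneg (norm_nonneg _) _

lemma ofReal_capP_rpow_le_eLpNorm {n : ℕ} {m K : ℝ≥0} (hm : 1 ≤ m) {Z : Set (En n)}
    {f : En n → ℝ} (hf : LipschitzOnWith K f (closedBall 0 1)) (hf1 : ∀ x ∈ Z, 1 ≤ f x)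
    (hf0 : ∀ x ∈ sphere (0 : En n) 1, f x = 0) :
    ENNReal.ofReal (capP m Z (ball (0 : En n) 1) ^ (m : ℝ)⁻¹) ≤
      eLpNorm (fderiv ℝ f) m (volume.restrict (ball 0 1)) := by
  have : IsFiniteMeasure (volume.restrict (ball (0 : En n) 1)) :=
    isFiniteMeasure_restrict.2 measure_ball_lt_top.ne
  have hm0 : 0 < m := zero_lt_one.trans_le hm
  have hmem : MemLp (fderiv ℝ f) m (volume.restrict (ball (0 : En n) 1)) := by
    refine MemLp.of_bound (measurable_fderiv ℝ f).aestronglyMeasurable K ?_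
    filter_upwards [ae_restrict_mem measurableSet_ball] with x hx
    exact norm_fderiv_le_of_lipschitzOn ℝ (isOpen_ball.mem_nhds hx)
      (hf.mono ball_subset_closedBall)
  rw [hmem.eLpNorm_eq_integral_rpow_norm (by exact_mod_cast hm0.ne') ENNReal.coe_ne_top,
    ENNReal.coe_toReal]
  refine ENNReal.ofReal_le_ofReal (Real.rpow_le_rpow (capP_nonneg _ _ _) ?_ (by positivity))
  refine csInf_le ⟨0, ?_⟩ ⟨f, ⟨⟨K, ?_⟩, hf1, ?_⟩, rfl⟩
  · rintro _ ⟨u, -, rfl⟩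
    exact integral_nonneg fun x => Real.rpow_nonneg (norm_nonneg _) _
  · rwa [closure_ball _ one_ne_zero]
  · rwa [frontier_ball _ one_ne_zero]

/-- The capacity controls the mean value of functions vanishing on the set. -/
lemma capP_mul_enorm_average_le {n : ℕ} (hn : 0 < n) {m : ℝ≥0} (hm : 1 ≤ m) :
    ∃ C : ℝ≥0, ∀ Z ⊆ closedBall (0 : En n) (1 / 2),
      ENNReal.ofReal (capP m Z (ball (0 : En n) 1) ^ (m : ℝ)⁻¹) ≤ C ∧
      ∀ (V : En n → ℝ) (K : ℝ≥0), LipschitzWith K V → (∀ x ∈ Z, V x = 0) →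
        ENNReal.ofReal (capP m Z (ball (0 : En n) 1) ^ (m : ℝ)⁻¹) *
          ‖⨍ y in ball (0 : En n) 1, V y‖ₑ ≤
        C * eLpNorm (fderiv ℝ V) m (volume.restrict (ball 0 1)) := by
  have hm0 : 0 < m := zero_lt_one.trans_le hm
  have hm1 : (1 : ℝ≥0∞) ≤ m := by exact_mod_cast hm
  obtain ⟨C₁, hC₁⟩ := sobolev_poincare_of_lipschitz hn hm hm0 fun _ => by simp
  let η : ContDiffBump (0 : En n) := ⟨1 / 2, 1, by norm_num, by norm_num⟩
  obtain ⟨M, hM⟩ := exists_bound_fderiv_contDiffBump η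
  have hηL := lipschitzWith_contDiffBump η hM
  have hη0 : ∀ x ∈ sphere (0 : En n) 1, η x = 0 := fun x hx =>
    η.zero_of_le_dist (by simpa [η] using (mem_sphere.1 hx).ge)
  have hη1 : ∀ x ∈ closedBall (0 : En n) (1 / 2), η x = 1 := fun x hx =>
    η.one_of_mem_closedBall hx
  have hvol : (volume (ball (0 : En n) 1)) ^ ((m : ℝ≥0∞).toReal⁻¹) ≠ ⊤ :=
    ENNReal.rpow_ne_top_of_nonneg (by positivity) measure_ball_lt_top.ne
  lift (volume (ball (0 : En n) 1)) ^ ((m : ℝ≥0∞).toReal⁻¹) to ℝ≥0 using hvol with β hβ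
  refine ⟨max (β * M) (1 + M * C₁), fun Z hZ => ⟨?_, fun V K hV hVZ => ?_⟩⟩
  · calc ENNReal.ofReal (capP m Z (ball (0 : En n) 1) ^ (m : ℝ)⁻¹)
        ≤ eLpNorm (fderiv ℝ η) m (volume.restrict (ball 0 1)) :=
          ofReal_capP_rpow_le_eLpNorm hm hηL.lipschitzOnWith
            (fun x hx => (hη1 x (hZ hx)).ge) hη0
      _ ≤ (volume.restrict (ball (0 : En n) 1) univ) ^ ((m : ℝ≥0∞).toReal⁻¹) *
            ENNReal.ofReal M := eLpNorm_le_of_ae_bound (Eventually.of_forall hM)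
      _ ≤ _ := by
          rw [Measure.restrict_apply_univ, ← hβ, ENNReal.ofReal_coe_nnreal, ← ENNReal.coe_mul]
          exact_mod_cast le_max_left _ _
  set c := ⨍ y in ball (0 : En n) 1, V y with hc
  rcases eq_or_ne c 0 with h0 | h0
  · simp [h0]
  set f : En n → ℝ := fun x => η x * (1 - c⁻¹ * V x) with hf
  have hgL : LipschitzWith (‖c⁻¹‖₊ * K) fun x => 1 - c⁻¹ * V x := by
    refine LipschitzWith.of_dist_le_mul fun x y => ?_
    rw [dist_comm x y, Real.dist_eq]
    have : 1 - c⁻¹ * V x - (1 - c⁻¹ * V y) = c⁻¹ * (V y - V x) := by ring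
    rw [this, abs_mul, NNReal.coe_mul, mul_assoc, ← Real.dist_eq]
    exact mul_le_mul_of_nonneg_left (hV.dist_le_mul y x) (abs_nonneg _)
  obtain ⟨B, hB⟩ := (isCompact_closedBall (0 : En n) 1).exists_bound_of_continuousOn
    hgL.continuous.continuousOn
  have hfL := lipschitzOnWith_mul_of_bounded (A := 1) (B := B.toNNReal)
    (S := closedBall (0 : En n) 1) hηL.lipschitzOnWith hgL.lipschitzOnWith
    (fun x _ => abs_contDiffBump_le_one η x) (fun x hx => (hB x hx).trans (Real.le_coe_toNNReal B))
  have hcap := ofReal_capP_rpow_le_eLpNorm (f := f) (Z := Z) hm hfL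
    (fun x hx => by simp [hf, hη1 x (hZ hx), hVZ x hx]) (fun x hx => by simp [hf, hη0 x hx])
  have hpt : ∀ᵐ x ∂(volume.restrict (ball (0 : En n) 1)),
      ‖fderiv ℝ f x‖ ≤ ‖c⁻¹‖ * (‖fderiv ℝ V x‖ + M * ‖V x - c‖) := by
    filter_upwards [ae_restrict_of_ae hV.ae_differentiableAt] with x hx
    have hg : HasFDerivAt (fun x => 1 - c⁻¹ * V x) (-(c⁻¹ • fderiv ℝ V x)) x :=
      (hx.hasFDerivAt.const_mul c⁻¹).const_sub 1
    refine (norm_fderiv_mul_le (η.contDiff.differentiable (n := 1) one_ne_zero x)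
      hg.differentiableAt (abs_contDiffBump_le_one η x) (hM x)).trans_eq ?_
    have h1 : 1 - c⁻¹ * V x = -(c⁻¹ * (V x - c)) := by field_simp; ring
    rw [hg.fderiv, h1, norm_neg, norm_neg, norm_smul, norm_mul]
    ring
  have hVm : AEStronglyMeasurable (fun x => V x - c) (volume.restrict (ball (0 : En n) 1)) :=
    (hV.continuous.sub continuous_const).aestronglyMeasurable
  have hmain : eLpNorm (fderiv ℝ f) m (volume.restrict (ball 0 1)) ≤
      ‖c⁻¹‖ₑ * ((1 + M * C₁) * eLpNorm (fderiv ℝ V) m (volume.restrict (ball 0 1))) := by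
    calc eLpNorm (fderiv ℝ f) m (volume.restrict (ball 0 1))
        ≤ eLpNorm (‖c⁻¹‖ • fun x => ‖fderiv ℝ V x‖ + M * ‖V x - c‖) m
            (volume.restrict (ball 0 1)) := eLpNorm_mono_ae_real hpt
      _ = ‖c⁻¹‖ₑ * eLpNorm (fun x => ‖fderiv ℝ V x‖ + M * ‖V x - c‖) m
            (volume.restrict (ball 0 1)) := by rw [eLpNorm_const_smul, enorm_norm]
      _ ≤ ‖c⁻¹‖ₑ * (eLpNorm (fun x => ‖fderiv ℝ V x‖) m (volume.restrict (ball 0 1)) +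
            eLpNorm ((M : ℝ) • fun x => ‖V x - c‖) m (volume.restrict (ball 0 1))) := by
          gcongr
          exact eLpNorm_add_le (measurable_fderiv ℝ V).norm.aestronglyMeasurable
            (hVm.norm.const_mul _) hm1
      _ = ‖c⁻¹‖ₑ * (eLpNorm (fderiv ℝ V) m (volume.restrict (ball 0 1)) +
            M * eLpNorm (fun x => V x - c) m (volume.restrict (ball 0 1))) := by
          rw [eLpNorm_const_smul, eLpNorm_norm, eLpNorm_norm]
          simp
      _ ≤ ‖c⁻¹‖ₑ * (eLpNorm (fderiv ℝ V) m (volume.restrict (ball 0 1)) +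
            M * (C₁ * eLpNorm (fderiv ℝ V) m (volume.restrict (ball 0 1)))) := by
          gcongr
          exact hC₁ V K hV
      _ = _ := by ring
  calc ENNReal.ofReal (capP m Z (ball (0 : En n) 1) ^ (m : ℝ)⁻¹) * ‖c‖ₑ
      ≤ ‖c⁻¹‖ₑ * ((1 + M * C₁) * eLpNorm (fderiv ℝ V) m (volume.restrict (ball 0 1))) * ‖c‖ₑ := by
        gcongr
        exact hcap.trans hmain
    _ = ‖c⁻¹ * c‖ₑ * ((1 + M * C₁) * eLpNorm (fderiv ℝ V) m (volume.restrict (ball 0 1))) := by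
        rw [enorm_mul]; ring
    _ ≤ _ := by
        rw [inv_mul_cancel₀ h0, enorm_one, one_mul]
        gcongr
        exact_mod_cast le_max_right _ _

/-- Maz'ya's inequality on the unit ball. -/
lemma mazya_eLpNorm {n : ℕ} (hn : 0 < n) {m s : ℝ≥0} (hm : 1 ≤ m) (hs : 1 ≤ s)
    (hms : (m : ℝ) < n → (m : ℝ)⁻¹ - (n : ℝ)⁻¹ ≤ (s : ℝ)⁻¹) :
    ∃ C : ℝ≥0, ∀ Z ⊆ closedBall (0 : En n) (1 / 2), ∀ (V : En n → ℝ) (K : ℝ≥0),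
      LipschitzWith K V → (∀ x ∈ Z, V x = 0) →
        ENNReal.ofReal (capP m Z (ball (0 : En n) 1) ^ (m : ℝ)⁻¹) *
          eLpNorm V s (volume.restrict (ball 0 1)) ≤
        C * eLpNorm (fderiv ℝ V) m (volume.restrict (ball 0 1)) := by
  have hs0 : 0 < s := zero_lt_one.trans_le hs
  have hs1 : (1 : ℝ≥0∞) ≤ s := by exact_mod_cast hs
  obtain ⟨C₁, hC₁⟩ := sobolev_poincare_of_lipschitz hn hm hs0 hms
  obtain ⟨C₂, hC₂⟩ := capP_mul_enorm_average_le hn hm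
  have hvol : (volume (ball (0 : En n) 1)) ^ (1 / (s : ℝ≥0∞).toReal) ≠ ⊤ :=
    ENNReal.rpow_ne_top_of_nonneg (by positivity) measure_ball_lt_top.ne
  lift (volume (ball (0 : En n) 1)) ^ (1 / (s : ℝ≥0∞).toReal) to ℝ≥0 using hvol with β hβ
  refine ⟨C₂ * C₁ + C₂ * β, fun Z hZ V K hV hVZ => ?_⟩
  obtain ⟨hcap, hmean⟩ := hC₂ Z hZ
  set κ := ENNReal.ofReal (capP m Z (ball (0 : En n) 1) ^ (m : ℝ)⁻¹)
  set c := ⨍ y in ball (0 : En n) 1, V y with hc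
  set D := eLpNorm (fderiv ℝ V) m (volume.restrict (ball 0 1))
  have hsplit : eLpNorm V s (volume.restrict (ball 0 1)) ≤
      eLpNorm (fun x => V x - c) s (volume.restrict (ball 0 1)) + ‖c‖ₑ * β := by
    have h := eLpNorm_add_le (μ := volume.restrict (ball (0 : En n) 1)) (f := fun x => V x - c)
      (g := fun _ => c) (hV.continuous.sub continuous_const).aestronglyMeasurable
      aestronglyMeasurable_const hs1
    rw [eLpNorm_const' c (by exact_mod_cast hs0.ne') ENNReal.coe_ne_top,
      Measure.restrict_apply_univ, ← hβ] at h
    convert h using 2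
    ext x
    simp
  calc κ * eLpNorm V s (volume.restrict (ball 0 1)) ≤ κ * (C₁ * D + ‖c‖ₑ * β) := by
        gcongr
        refine hsplit.trans ?_
        gcongr
        exact hC₁ V K hV
    _ = κ * (C₁ * D) + κ * ‖c‖ₑ * β := by ring
    _ ≤ C₂ * (C₁ * D) + C₂ * D * β :=
        add_le_add (mul_le_mul' hcap le_rfl) (mul_le_mul' (hmean V K hV hVZ) le_rfl)
    _ = _ := by push_cast; ring

lemma memLp_of_lipschitzOnWith {n : ℕ} {V : En n → ℝ} {K : ℝ≥0} {z : En n} {r : ℝ}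
    (hV : LipschitzOnWith K V (ball z r)) (s : ℝ≥0∞) :
    MemLp V s (volume.restrict (ball z r)) := by
  have : IsFiniteMeasure (volume.restrict (ball z r)) :=
    isFiniteMeasure_restrict.2 measure_ball_lt_top.ne
  refine MemLp.of_bound (C := |V z| + K * r)
    (hV.continuousOn.aestronglyMeasurable measurableSet_ball) ?_
  filter_upwards [ae_restrict_mem measurableSet_ball] with x hx
  have hz : z ∈ ball z r := mem_ball_self (pos_of_mem_ball hx)
  have h1 := hV.dist_le_mul x hx z hz
  have h2 := abs_sub_abs_le_abs_sub (V x) (V z)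
  have h3 : (K : ℝ) * dist x z ≤ K * r := mul_le_mul_of_nonneg_left (mem_ball.1 hx).le K.2
  rw [Real.dist_eq] at h1
  rw [Real.norm_eq_abs]
  linarith

lemma memLp_fderiv_of_lipschitzOnWith {n : ℕ} {V : En n → ℝ} {K : ℝ≥0} {z : En n} {r : ℝ}
    (hV : LipschitzOnWith K V (ball z r)) (s : ℝ≥0∞) :
    MemLp (fderiv ℝ V) s (volume.restrict (ball z r)) := by
  have : IsFiniteMeasure (volume.restrict (ball z r)) :=
    isFiniteMeasure_restrict.2 measure_ball_lt_top.ne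
  refine MemLp.of_bound (measurable_fderiv ℝ V).aestronglyMeasurable K ?_
  filter_upwards [ae_restrict_mem measurableSet_ball] with x hx
  exact norm_fderiv_le_of_lipschitzOn ℝ (isOpen_ball.mem_nhds hx) hV

lemma setIntegral_ball_comp_add_smul {n : ℕ} (F : En n → ℝ) (z : En n) {r : ℝ} (hr : 0 < r) :
    ∫ x in ball (0 : En n) 1, F (z + r • x) = (r ^ n)⁻¹ * ∫ x in ball z r, F x := by
  have h := Measure.setIntegral_comp_smul_of_pos (volume : Measure (En n)) (fun x => F (z + x))
    (ball (0 : En n) 1) hr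
  rw [h, finrank_euclideanSpace_fin, smul_eq_mul, smul_unitBall_of_pos hr]
  congr 1
  have h2 := (measurePreserving_add_left (volume : Measure (En n)) z).setIntegral_preimage_emb
    (measurableEmbedding_addLeft z) F (ball z r)
  rw [← h2]
  congr 2
  ext x
  simp

lemma setAverage_ball_eq {n : ℕ} (F : En n → ℝ) (z : En n) {r : ℝ} (hr : 0 < r) :
    ⨍ x in ball z r, F x = ⨍ x in ball (0 : En n) 1, F (z + r • x) := by
  have h1 := setIntegral_ball_comp_add_smul (fun _ => (1 : ℝ)) z hr
  rw [setIntegral_const, setIntegral_const, smul_eq_mul, smul_eq_mul, mul_one, mul_one] at h1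
  rw [setAverage_eq, setAverage_eq, setIntegral_ball_comp_add_smul F z hr, h1, smul_eq_mul,
    smul_eq_mul]
  field_simp

lemma mazya_average {n : ℕ} (hn : 0 < n) {m s : ℝ} (hm : 1 ≤ m) (hs : 1 ≤ s)
    (hms : m < n → m⁻¹ - (n : ℝ)⁻¹ ≤ s⁻¹) :
    ∃ C : ℝ, 0 < C ∧ ∀ Z ⊆ closedBall (0 : En n) (1 / 2), ∀ (V : En n → ℝ) (K : ℝ≥0),
      LipschitzWith K V → (∀ x ∈ Z, V x = 0) → 0 < capP m Z (ball (0 : En n) 1) →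
        ⨍ x in ball (0 : En n) 1, |V x| ^ s ≤
          C * (capP m Z (ball (0 : En n) 1) ^ (s / m))⁻¹ *
            (⨍ x in ball (0 : En n) 1, gnorm V x ^ m) ^ (s / m) := by
  lift m to ℝ≥0 using zero_le_one.trans hm
  lift s to ℝ≥0 using zero_le_one.trans hs
  have hm0 : 0 < m := zero_lt_one.trans_le (by exact_mod_cast hm)
  have hs0 : 0 < s := zero_lt_one.trans_le (by exact_mod_cast hs)
  obtain ⟨C, hC⟩ := mazya_eLpNorm hn (m := m) (s := s) (by exact_mod_cast hm)
    (by exact_mod_cast hs) hms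
  set β := volume.real (ball (0 : En n) 1) with hβ
  have hβ0 : 0 < β := ENNReal.toReal_pos (measure_ball_pos _ _ one_pos).ne' measure_ball_lt_top.ne
  refine ⟨C ^ (s : ℝ) * β ^ ((s : ℝ) / m) / β + 1, by positivity, fun Z hZ V K hV hVZ hcap => ?_⟩
  have h := hC Z hZ V K hV hVZ
  rw [(memLp_of_lipschitzOnWith hV.lipschitzOnWith s).eLpNorm_eq_integral_rpow_norm
      (by exact_mod_cast hs0.ne') ENNReal.coe_ne_top,
    (memLp_fderiv_of_lipschitzOnWith hV.lipschitzOnWith m).eLpNorm_eq_integral_rpow_norm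
      (by exact_mod_cast hm0.ne') ENNReal.coe_ne_top, ENNReal.coe_toReal, ENNReal.coe_toReal,
    ← ENNReal.ofReal_mul (by positivity), ← ENNReal.ofReal_coe_nnreal,
    ← ENNReal.ofReal_mul C.coe_nonneg] at h
  have hI : ∫ x in ball (0 : En n) 1, ‖V x‖ ^ (s : ℝ) =
      β * ⨍ x in ball (0 : En n) 1, |V x| ^ (s : ℝ) := by
    rw [setAverage_eq, smul_eq_mul, mul_inv_cancel_left₀ hβ0.ne']
    rfl
  have hJ : ∫ x in ball (0 : En n) 1, ‖fderiv ℝ V x‖ ^ (m : ℝ) =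
      β * ⨍ x in ball (0 : En n) 1, gnorm V x ^ (m : ℝ) := by
    rw [setAverage_eq, smul_eq_mul, mul_inv_cancel_left₀ hβ0.ne']
    rfl
  have hI0 : 0 ≤ ⨍ x in ball (0 : En n) 1, |V x| ^ (s : ℝ) := by
    rw [setAverage_eq]
    exact smul_nonneg (by positivity) (integral_nonneg fun x => by positivity)
  have hJ0 : 0 ≤ ⨍ x in ball (0 : En n) 1, gnorm V x ^ (m : ℝ) := by
    rw [setAverage_eq]
    exact smul_nonneg (by positivity)
      (integral_nonneg fun x => Real.rpow_nonneg (norm_nonneg _) _)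
  rw [hI, hJ] at h
  set I := ⨍ x in ball (0 : En n) 1, |V x| ^ (s : ℝ)
  set J := ⨍ x in ball (0 : En n) 1, gnorm V x ^ (m : ℝ)
  set κ := capP m Z (ball (0 : En n) 1)
  have h' := (ENNReal.ofReal_le_ofReal_iff (by positivity)).1 h
  have h'' := Real.rpow_le_rpow (by positivity) h' s.coe_nonneg
  have hs0' : (s : ℝ) ≠ 0 := by positivity
  rw [Real.mul_rpow (by positivity) (by positivity), Real.mul_rpow C.coe_nonneg (by positivity),
    ← Real.rpow_mul hcap.le, ← Real.rpow_mul (by positivity), ← Real.rpow_mul (by positivity),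
    inv_mul_cancel₀ hs0', Real.rpow_one, inv_mul_eq_div, Real.mul_rpow hβ0.le hJ0] at h''
  have hκ : 0 < κ ^ ((s : ℝ) / m) := by positivity
  have hJs : 0 ≤ J ^ ((s : ℝ) / m) := by positivity
  calc I = (κ ^ ((s : ℝ) / m) * (β * I)) / (κ ^ ((s : ℝ) / m) * β) := by field_simp
    _ ≤ (C ^ (s : ℝ) * (β ^ ((s : ℝ) / m) * J ^ ((s : ℝ) / m))) / (κ ^ ((s : ℝ) / m) * β) := by
        gcongr
    _ = (C ^ (s : ℝ) * β ^ ((s : ℝ) / m) / β) * (κ ^ ((s : ℝ) / m))⁻¹ * J ^ ((s : ℝ) / m) := by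
        field_simp
    _ ≤ _ := by
        gcongr
        linarith

lemma exists_lipschitzWith_rescaled {n : ℕ} {u : En n → ℝ} {K : ℝ≥0} {z : En n} {r : ℝ}
    (hr : 0 < r) (hu : LipschitzOnWith K u (ball z r)) :
    ∃ (V : En n → ℝ) (K' : ℝ≥0), LipschitzWith K' V ∧
      ∀ x ∈ ball (0 : En n) 1, V x = u (z + r • x) ∧ gnorm V x = r * gnorm u (z + r • x) := by
  have hmaps : MapsTo (fun x : En n => z + r • x) (ball 0 1) (ball z r) := fun x hx => by
    rw [mem_ball_zero_iff] at hx
    rw [mem_ball_iff_norm, add_sub_cancel_left, norm_smul, Real.norm_of_nonneg hr.le]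
    exact mul_lt_of_lt_one_right hr hx
  have hlin : LipschitzWith r.toNNReal fun x : En n => z + r • x :=
    LipschitzWith.of_dist_le_mul fun x y => by
      rw [dist_add_left, dist_smul₀, Real.norm_of_nonneg hr.le, Real.coe_toNNReal r hr.le]
  obtain ⟨V, hV, hVu⟩ := (hu.comp hlin.lipschitzOnWith hmaps).extend_real
  refine ⟨V, _, hV, fun x hx => ⟨(hVu hx).symm, ?_⟩⟩
  have hev : V =ᶠ[𝓝 x] fun y => u (z + r • y) :=
    (hVu.symm).eventuallyEq_of_mem (isOpen_ball.mem_nhds hx)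
  have h1 : fderiv ℝ (fun y => u (z + r • y)) x = r • fderiv ℝ u (z + r • x) := by
    have h2 := fderiv_comp_smul (f := fun y => u (z + y)) (x := x) (r)
    rw [fderiv_comp_add_left] at h2
    exact h2
  rw [gnorm, gnorm, hev.fderiv_eq, h1, norm_smul, Real.norm_of_nonneg hr.le]

/-- **Maz'ya type inequality for the double-phase integrand** (Lemma 5.1). -/
theorem mazya_type_inequality
    (n : ℕ) (hn : 0 < n) (p q m : ℝ)
    (hp : 1 < p) (hpq : p < q) (hm1 : 1 ≤ m) (hmp : m ≤ p)
    (hmn : m < (n : ℝ) → q ≤ (n : ℝ) * m / ((n : ℝ) - m)) :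
    ∃ c : ℝ, 0 < c ∧
      ∀ (α A : ℝ) (a : En n → ℝ),
        0 < α → α ≤ 1 → (∀ x, 0 ≤ a x) → 0 ≤ A →
        (∀ x y, |a x - a y| ≤ A * dist x y ^ α) →
        q / p ≤ 1 + α / n →
        ∀ (z : En n) (r : ℝ) (u : En n → ℝ), 0 < r →
          (∃ K, LipschitzOnWith K u (ball z r)) →
          ∀ Z : Set (En n),
            Z = {x ∈ closedBall (0 : En n) (1 / 2) | u (z + r • x) = 0} →
            0 < capP m Z (ball (0 : En n) 1) →
            ∀ (y : En n) (R astar : ℝ), 0 < R →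
              (astar = aInfOn a (ball y R) ∨ astar = aSupOn a (ball y R)) →
              (⨍ x in ball z r, (|u x| ^ p + astar * |u x| ^ q)) ≤
                c * (1 + astar * capP m Z (ball (0 : En n) 1) ^ ((p - q) / m) *
                      ((⨍ x in ball z r, (r * gnorm u x) ^ m) ^ (1 / m)) ^ (q - p)) /
                    capP m Z (ball (0 : En n) 1) ^ (p / m) *
                  (⨍ x in ball z r, (r * gnorm u x) ^ m) ^ (p / m) := by
  have hm0 : 0 < m := by linarith
  have hn0 : (0 : ℝ) < n := by exact_mod_cast hn
  have hq : m < n → m⁻¹ - (n : ℝ)⁻¹ ≤ q⁻¹ := fun hlt => by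
    have h := hmn hlt
    have hsub : 0 < (n : ℝ) - m := by linarith
    have := inv_anti₀ (by linarith) h
    refine le_trans (le_of_eq ?_) this
    field_simp
  have hp' : m < n → m⁻¹ - (n : ℝ)⁻¹ ≤ p⁻¹ := fun hlt =>
    (hq hlt).trans (inv_anti₀ (by linarith) hpq.le)
  obtain ⟨Cp, hCp0, hCp⟩ := mazya_average hn hm1 hp.le hp'
  obtain ⟨Cq, hCq0, hCq⟩ := mazya_average hn hm1 (hp.trans hpq).le hq
  refine ⟨max Cp Cq, lt_max_of_lt_left hCp0, ?_⟩
  rintro - - a - - ha - - - z r u hr ⟨K, hu⟩ Z rfl hcap y R astar - hastar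
  have hastar0 : 0 ≤ astar := by
    rcases hastar with rfl | rfl
    · exact Real.sInf_nonneg (by rintro _ ⟨x, -, rfl⟩; exact ha x)
    · exact Real.sSup_nonneg (by rintro _ ⟨x, -, rfl⟩; exact ha x)
  obtain ⟨V, K', hV, hVu⟩ := exists_lipschitzWith_rescaled hr hu
  set Z := {x ∈ closedBall (0 : En n) (1 / 2) | u (z + r • x) = 0} with hZ
  have hZsub : Z ⊆ closedBall (0 : En n) (1 / 2) := fun x hx => hx.1
  have hVZ : ∀ x ∈ Z, V x = 0 := fun x hx => by
    rw [(hVu x (closedBall_subset_ball (by norm_num) hx.1)).1, hx.2]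
  have h1 := hCp Z hZsub V K' hV hVZ hcap
  have h2 := hCq Z hZsub V K' hV hVZ hcap
  have hint : ∀ {s : ℝ}, 1 < s → Integrable (fun x => |V x| ^ s)
      (volume.restrict (ball (0 : En n) 1)) := fun {s} hs => by
    have hs0 : 0 < s := by linarith
    have h := (memLp_of_lipschitzOnWith (z := 0) (r := 1) hV.lipschitzOnWith
      (ENNReal.ofReal s)).integrable_norm_rpow (by simpa using hs0) ENNReal.ofReal_ne_top
    simpa only [ENNReal.toReal_ofReal hs0.le, Real.norm_eq_abs] using h
  have hL : ⨍ x in ball z r, (|u x| ^ p + astar * |u x| ^ q) =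
      (⨍ x in ball (0 : En n) 1, |V x| ^ p) + astar * ⨍ x in ball (0 : En n) 1, |V x| ^ q := by
    rw [setAverage_ball_eq _ z hr, setAverage_eq, setAverage_eq, setAverage_eq, smul_eq_mul,
      smul_eq_mul, smul_eq_mul, setIntegral_congr_fun (g := fun x => |V x| ^ p + astar * |V x| ^ q)
        measurableSet_ball fun x hx => by simp only [(hVu x hx).1],
      integral_add (hint hp) ((hint (hp.trans hpq)).const_mul _), integral_const_mul]
    ring
  have hG : ⨍ x in ball z r, (r * gnorm u x) ^ m =
      ⨍ x in ball (0 : En n) 1, gnorm V x ^ m := by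
    rw [setAverage_ball_eq _ z hr, setAverage_eq, setAverage_eq,
      setIntegral_congr_fun (g := fun x => gnorm V x ^ m)
        measurableSet_ball fun x hx => by simp only [(hVu x hx).2]]
  have hG0 : 0 ≤ ⨍ x in ball (0 : En n) 1, gnorm V x ^ m := by
    rw [setAverage_eq]
    exact smul_nonneg (by positivity)
      (integral_nonneg fun x => Real.rpow_nonneg (norm_nonneg _) _)
  rw [hL, hG]
  set G := ⨍ x in ball (0 : En n) 1, gnorm V x ^ m
  set κ := capP m Z (ball (0 : En n) 1)
  have hκ : κ ^ ((p - q) / m) = κ ^ (p / m) * (κ ^ (q / m))⁻¹ := by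
    rw [sub_div, Real.rpow_sub hcap, div_eq_mul_inv]
  have hGq : (G ^ (1 / m)) ^ (q - p) * G ^ (p / m) = G ^ (q / m) := by
    rw [← Real.rpow_mul hG0, ← Real.rpow_add_of_nonneg hG0
      (mul_nonneg (by positivity) (by linarith)) (div_nonneg (by linarith) hm0.le)]
    congr 1
    ring
  have hκp : 0 < κ ^ (p / m) := by positivity
  have hκq : 0 < κ ^ (q / m) := by positivity
  have hGp0 : 0 ≤ G ^ (p / m) := by positivity
  have hGq0 : 0 ≤ G ^ (q / m) := by positivity
  calc (⨍ x in ball (0 : En n) 1, |V x| ^ p) + astar * ⨍ x in ball (0 : En n) 1, |V x| ^ q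
      ≤ max Cp Cq * (κ ^ (p / m))⁻¹ * G ^ (p / m) +
          astar * (max Cp Cq * (κ ^ (q / m))⁻¹ * G ^ (q / m)) := by
        gcongr
        · refine h1.trans ?_
          gcongr
          exact le_max_left _ _
        · refine h2.trans ?_
          gcongr
          exact le_max_right _ _
    _ = _ := by
        rw [hκ, ← hGq]
        field_simp
end
end

section
/- Let n ≥ 1, 1 < p < q < ∞, a_o > 0, and set φ_o(s) = s^p + a_o s^q. Then there is a constant c = c(n,p,q,a_o) such that for every 0 < r ≤ 1 and every nonnegative Lipschitz function u with compact support in B(0,r) satisfying u ≥ 1 on the closed ball B̄(0, r/2), one has r^{n−q} ≤ c · ∫_{B(0,r)} φ_o(|∇u(x)|) dx. In particular, since for every constant C > 0 there is r_C > 0 with C r^{q−n} < r^{p−n} for all 0 < r < r_C, this energy lower bound is of strictly larger order than the p-capacity scale r^{n−p} as r → 0 when p < q. -/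
open MeasureTheory Metric Set

noncomputable section

lemma gnorm_nonneg {n : ℕ} (u : En n → ℝ) (x : En n) : 0 ≤ gnorm u x := norm_nonneg _

lemma measurable_gnorm {n : ℕ} (u : En n → ℝ) : Measurable (gnorm u) :=
  (measurable_fderiv ℝ u).norm

lemma gnorm_le_of_lipschitz {n : ℕ} {u : En n → ℝ} {K : NNReal} (hu : LipschitzWith K u)
    (x : En n) : gnorm u x ≤ K :=
  norm_fderiv_le_of_lipschitz ℝ hu

lemma integrableOn_gnorm_rpow {n : ℕ} {u : En n → ℝ} {K : NNReal} (hu : LipschitzWith K u)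
    {s : ℝ} (hs : 0 ≤ s) (x : En n) (r : ℝ) :
    IntegrableOn (fun y => gnorm u y ^ s) (ball x r) := by
  refine Measure.integrableOn_of_bounded (M := (K : ℝ) ^ s) measure_ball_lt_top.ne
    ((measurable_gnorm u).pow_const s).aestronglyMeasurable (ae_of_all _ fun y => ?_)
  rw [Real.norm_of_nonneg (Real.rpow_nonneg (gnorm_nonneg u y) s)]
  exact Real.rpow_le_rpow (gnorm_nonneg u y) (gnorm_le_of_lipschitz hu y) hs

/-- Poincaré inequality in `L¹` on a ball, obtained by integrating `u` by parts against a
coordinate function. -/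
lemma integral_le_mul_integral_gnorm {n : ℕ} (hn : 0 < n) {u : En n → ℝ} {K : NNReal}
    (hu : LipschitzWith K u) (hc : HasCompactSupport u) {r : ℝ}
    (hs : tsupport u ⊆ ball (0 : En n) r) :
    ∫ x, u x ≤ r * ∫ x in ball (0 : En n) r, gnorm u x := by
  let i : Fin n := ⟨0, hn⟩
  let e : En n := EuclideanSpace.single i 1
  have he : ‖e‖ = 1 := by simp [e]
  let L : En n →L[ℝ] ℝ := innerSL ℝ e
  have hLe : L e = 1 := by simp [L, he]
  have hLx : ∀ x, |L x| ≤ ‖x‖ := fun x => by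
    simpa [L, he] using abs_real_inner_le_norm e x
  have key := LipschitzWith.integral_lineDeriv_mul_eq (μ := volume) L.lipschitz hu hc e
  have h1 : ∀ x, lineDeriv ℝ L x e = 1 := fun x => by
    rw [L.differentiableAt.lineDeriv_eq_fderiv, L.fderiv, hLe]
  simp only [h1, one_mul] at key
  have hzero : ∀ x, x ∉ ball (0 : En n) r → gnorm u x = 0 := fun x hx => by
    have : fderiv ℝ u x = 0 := by
      by_contra h
      exact hx (hs (support_fderiv_subset ℝ h))
    simp [gnorm, this]
  have hint : IntegrableOn (gnorm u) (ball (0 : En n) r) := by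
    simpa using integrableOn_gnorm_rpow hu zero_le_one 0 r
  have hind : ∫ x in ball (0 : En n) r, r * gnorm u x =
      ∫ x, (ball (0 : En n) r).indicator (fun x => r * gnorm u x) x :=
    (integral_indicator measurableSet_ball).symm
  rw [key, ← integral_const_mul, hind]
  refine (Real.le_norm_self _).trans (norm_integral_le_of_norm_le
    ((integrable_indicator_iff measurableSet_ball).2 (hint.const_mul r)) ?_)
  filter_upwards [hu.ae_differentiableAt (μ := volume)] with x hx
  have h2 : |lineDeriv ℝ u x (-e)| ≤ gnorm u x := by
    rw [hx.lineDeriv_eq_fderiv]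
    simpa [he, gnorm] using (fderiv ℝ u x).le_opNorm (-e)
  rw [norm_mul, Real.norm_eq_abs, Real.norm_eq_abs]
  by_cases hxr : x ∈ ball (0 : En n) r
  · rw [indicator_of_mem hxr, mul_comm]
    have hxr' : ‖x‖ ≤ r := by simpa using (mem_ball.1 hxr).le
    exact mul_le_mul ((hLx x).trans hxr') h2 (abs_nonneg _) ((norm_nonneg x).trans hxr')
  · rw [indicator_of_notMem hxr]
    rw [hzero x hxr] at h2
    simp [le_antisymm h2 (abs_nonneg _)]

lemma volume_real_ball {n : ℕ} {r : ℝ} (hr : 0 < r) :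
    volume.real (ball (0 : En n) r) = r ^ n * volume.real (ball (0 : En n) 1) := by
  rw [measureReal_def, Measure.addHaar_ball_of_pos _ _ hr, ENNReal.toReal_mul,
    ENNReal.toReal_ofReal (by positivity), measureReal_def]
  simp

lemma volume_real_ball_half_le {n : ℕ} {u : En n → ℝ} (hu : Continuous u)
    (h0 : ∀ x, 0 ≤ u x) (hc : HasCompactSupport u) {r : ℝ}
    (h1 : ∀ x ∈ closedBall (0 : En n) (r / 2), 1 ≤ u x) :
    volume.real (ball (0 : En n) (r / 2)) ≤ ∫ x, u x := by
  have hint : Integrable u := hu.integrable_of_hasCompactSupport hc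
  calc volume.real (ball (0 : En n) (r / 2))
      = ∫ _ in ball (0 : En n) (r / 2), (1 : ℝ) := by simp
    _ ≤ ∫ x in ball (0 : En n) (r / 2), u x :=
        setIntegral_mono_on (integrableOn_const measure_ball_lt_top.ne) hint.integrableOn
          measurableSet_ball fun x hx => h1 x (ball_subset_closedBall hx)
    _ ≤ ∫ x, u x := setIntegral_le_integral hint (ae_of_all _ h0)

/-- Tangent-line form of convexity of `s ↦ s ^ q` at the point `t`. -/
lemma rpow_tangent_le {q s t : ℝ} (hq : 1 ≤ q) (hs : 0 ≤ s) (ht : 0 < t) :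
    t ^ q * (1 + q * (t⁻¹ * s - 1)) ≤ s ^ q := by
  have h := one_add_mul_self_le_rpow_one_add (s := t⁻¹ * s - 1)
    (by have : 0 ≤ t⁻¹ * s := by positivity
        linarith) hq
  calc t ^ q * (1 + q * (t⁻¹ * s - 1)) ≤ t ^ q * (1 + (t⁻¹ * s - 1)) ^ q := by gcongr
    _ = s ^ q := by
      rw [add_sub_cancel, ← Real.mul_rpow ht.le (by positivity), mul_inv_cancel_left₀ ht.ne']

/-- Lower bound for the `q`-energy of a competitor of the condenser `(B̄(0,r/2), B(0,r))`. -/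
lemma le_integral_gnorm_rpow {n : ℕ} (hn : 0 < n) {q r : ℝ} (hq : 1 ≤ q) (hr : 0 < r)
    {u : En n → ℝ} {K : NNReal} (hu : LipschitzWith K u) (h0 : ∀ x, 0 ≤ u x)
    (hc : HasCompactSupport u) (hs : tsupport u ⊆ ball (0 : En n) r)
    (h1 : ∀ x ∈ closedBall (0 : En n) (r / 2), 1 ≤ u x) :
    ((1 / 2 : ℝ) ^ n) ^ q * volume.real (ball (0 : En n) 1) * r ^ ((n : ℝ) - q) ≤
      ∫ x in ball (0 : En n) r, gnorm u x ^ q := by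
  set ω := volume.real (ball (0 : En n) 1)
  set ε : ℝ := (1 / 2 : ℝ) ^ n
  have hε0 : 0 < ε := by positivity
  set G := ∫ x in ball (0 : En n) r, gnorm u x
  have hG : ε * (r ^ n * ω) ≤ r * G := by
    have := (volume_real_ball_half_le hu.continuous h0 hc h1).trans
      (integral_le_mul_integral_gnorm hn hu hc hs)
    rw [volume_real_ball (half_pos hr), div_eq_mul_one_div, mul_pow] at this
    linarith
  set t := ε / r with ht
  have ht0 : 0 < t := by positivity
  have hint : IntegrableOn (gnorm u) (ball (0 : En n) r) := by
    simpa using integrableOn_gnorm_rpow hu zero_le_one 0 r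
  have hconst : ∀ a : ℝ, IntegrableOn (fun _ => a) (ball (0 : En n) r) := fun a =>
    integrableOn_const measure_ball_lt_top.ne
  have hlin : IntegrableOn (fun x => t⁻¹ * gnorm u x - 1) (ball (0 : En n) r) :=
    (hint.const_mul _).sub (hconst 1)
  have hV : r ^ n * ω ≤ t⁻¹ * G := by
    rw [ht, inv_div, div_mul_eq_mul_div, le_div_iff₀ hε0]
    linarith
  calc ε ^ q * ω * r ^ ((n : ℝ) - q) = t ^ q * (r ^ n * ω) := by
        rw [Real.rpow_sub hr, Real.rpow_natCast, Real.div_rpow hε0.le hr.le]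
        ring
    _ ≤ t ^ q * (r ^ n * ω + q * (t⁻¹ * G - r ^ n * ω)) := by
        gcongr
        exact le_add_of_nonneg_right (mul_nonneg (by linarith) (sub_nonneg.2 hV))
    _ = ∫ x in ball (0 : En n) r, t ^ q * (1 + q * (t⁻¹ * gnorm u x - 1)) := by
        rw [integral_const_mul, integral_add (hconst 1) (hlin.const_mul q), integral_const_mul,
          integral_sub (hint.const_mul _) (hconst 1), integral_const_mul]
        simp [volume_real_ball hr, ω, G]
    _ ≤ ∫ x in ball (0 : En n) r, gnorm u x ^ q :=
        integral_mono (((hconst 1).add (hlin.const_mul q)).const_mul _)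
          (integrableOn_gnorm_rpow hu (by linarith) 0 r)
          fun x => rpow_tangent_le hq (gnorm_nonneg u x) ht0

lemma exists_mul_rpow_lt_rpow {a b C : ℝ} (hab : a < b) (hC : 0 < C) :
    ∃ δ : ℝ, 0 < δ ∧ ∀ r : ℝ, 0 < r → r < δ → C * r ^ b < r ^ a := by
  have hd : 0 < b - a := sub_pos.2 hab
  refine ⟨C⁻¹ ^ (b - a)⁻¹, by positivity, fun r hr hrδ => ?_⟩
  have h := (Real.lt_rpow_inv_iff_of_pos hr.le (by positivity) hd).1 hrδ
  rw [Real.rpow_sub hr, div_lt_iff₀ (by positivity)] at h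
  exact (lt_inv_mul_iff₀ hC).1 h


/-- **Counterexample, part 3** (Example 5.3): a lower bound of order `r^{n-q}` for
the double-phase energy of any admissible competitor for the condenser
`(B̄(0,r/2), B(0,r))`; since `C r^{q-n} < r^{p-n}` for all sufficiently small
`r`, this lower bound is of strictly larger order than the `p`-capacity scale
`r^{n-p}` as `r → 0`. -/
theorem counterexample_energy_lower_bound
    (n : ℕ) (hn : 0 < n) (p q ao : ℝ)
    (hp : 1 < p) (hpq : p < q) (hao : 0 < ao) :
    (∃ c : ℝ, 0 < c ∧
      ∀ r : ℝ, 0 < r → r ≤ 1 →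
        ∀ u : En n → ℝ, (∃ K, LipschitzWith K u) → (∀ x, 0 ≤ u x) →
          HasCompactSupport u → tsupport u ⊆ ball (0 : En n) r →
          (∀ x ∈ closedBall (0 : En n) (r / 2), 1 ≤ u x) →
          r ^ ((n : ℝ) - q) ≤
            c * (∫ x in ball (0 : En n) r,
              (gnorm u x ^ p + ao * gnorm u x ^ q))) ∧
    (∀ C : ℝ, 0 < C → ∃ rC : ℝ, 0 < rC ∧ ∀ r : ℝ, 0 < r → r < rC →
      C * r ^ (q - (n : ℝ)) < r ^ (p - (n : ℝ))) := by
  refine ⟨?_, fun C hC => exists_mul_rpow_lt_rpow (sub_lt_sub_right hpq _) hC⟩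
  have hω : 0 < volume.real (ball (0 : En n) 1) :=
    ENNReal.toReal_pos (measure_ball_pos _ _ one_pos).ne' measure_ball_lt_top.ne
  set κ := ((1 / 2 : ℝ) ^ n) ^ q * volume.real (ball (0 : En n) 1)
  have hκ : 0 < κ := by positivity
  refine ⟨(ao * κ)⁻¹, by positivity, fun r hr _ u ⟨K, hu⟩ h0 hc hs h1 => ?_⟩
  rw [le_inv_mul_iff₀ (by positivity), mul_assoc]
  have hq := integrableOn_gnorm_rpow hu (by linarith : 0 ≤ q) 0 r
  calc ao * (κ * r ^ ((n : ℝ) - q))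
      ≤ ao * ∫ x in ball (0 : En n) r, gnorm u x ^ q := by
        gcongr
        exact le_integral_gnorm_rpow hn (by linarith) hr hu h0 hc hs h1
    _ = ∫ x in ball (0 : En n) r, ao * gnorm u x ^ q := (integral_const_mul _ _).symm
    _ ≤ ∫ x in ball (0 : En n) r, (gnorm u x ^ p + ao * gnorm u x ^ q) :=
        integral_mono (hq.const_mul ao)
          ((integrableOn_gnorm_rpow hu (by linarith) 0 r).add (hq.const_mul ao))
          fun x => le_add_of_nonneg_left (Real.rpow_nonneg (gnorm_nonneg u x) p)
end
end
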